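/- arXiv:2206.00163 — 4 statements merged into one kernel-verified Lean document; each statement's English description precedes it below -/
import Mathlib

section
/- The Rogers–Ramanujan product formulas: G(q) := ∑_{n≥0} q^{n²}/(q;q)_n = 1/((q;q⁵)_∞ (q⁴;q⁵)_∞) and H(q) := ∑_{n≥0} q^{n(n+1)}/(q;q)_n = 1/((q²;q⁵)_∞ (q³;q⁵)_∞). -/
noncomputable def rrE (q : ℂ) (m : ℤ) : ℂ :=
  if m < 0 then 0 else (∏ k ∈ Finset.range m.toNat, (1 - q ^ (k + 1)))⁻¹

lemma rr_one_sub_ne {q : ℂ} (hq : ‖q‖ < 1) (n : ℕ) : 1 - q ^ (n + 1) ≠ 0 := by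
  intro h
  have h1 : q ^ (n+1) = 1 := (sub_eq_zero.mp h).symm
  have h2 : ‖q‖ ^ (n+1) = 1 := by rw [← norm_pow, h1, norm_one]
  have h3 := pow_lt_one₀ (norm_nonneg q) hq (Nat.succ_ne_zero n)
  simp only [Nat.succ_eq_add_one] at h3
  linarith

lemma rrE_neg (q : ℂ) {m : ℤ} (h : m < 0) : rrE q m = 0 := by simp [rrE, h]

lemma rrE_nat (q : ℂ) (n : ℕ) : rrE q (n : ℤ) = (∏ k ∈ Finset.range n, (1 - q ^ (k + 1)))⁻¹ := by
  simp [rrE]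

lemma rrE_zero (q : ℂ) : rrE q 0 = 1 := by simp [rrE]

lemma rrE_rec {q : ℂ} (hq : ‖q‖ < 1) (m : ℤ) : (1 - q ^ m) * rrE q m = rrE q (m - 1) := by
  rcases lt_trichotomy m 0 with h | h | h
  · rw [rrE_neg q h, rrE_neg q (by omega), mul_zero]
  · subst h; simp [rrE]
  · obtain ⟨n, rfl⟩ : ∃ n : ℕ, m = ((n + 1 : ℕ) : ℤ) := ⟨(m - 1).toNat, by omega⟩
    have : (((n + 1 : ℕ) : ℤ) - 1) = (n : ℤ) := by push_cast; ring
    rw [this, rrE_nat, rrE_nat, Finset.prod_range_succ, mul_inv, zpow_natCast]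
    have := rr_one_sub_ne hq n
    field_simp

/-- triangular exponent -/
def rrT (j : ℤ) : ℤ := j * (j - 1) / 2

lemma rrT_two (j : ℤ) : 2 * rrT j = j * (j - 1) := by
  unfold rrT
  apply Int.mul_ediv_cancel'
  rcases Int.even_or_odd' j with ⟨k, rfl | rfl⟩
  · exact ⟨k * (2 * k - 1), by ring⟩
  · exact ⟨(2*k+1) * k, by ring⟩

lemma rrT_succ (j : ℤ) : rrT (j + 1) = rrT j + j := by
  have h1 := rrT_two j
  have h2 := rrT_two (j+1)
  nlinarith

lemma rr_summable (q : ℂ) (t : ℤ → ℂ) (a b : ℤ) :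
    Summable (fun j : ℤ => t j * (rrE q (a - j) * rrE q (b + j))) := by
  apply summable_of_hasFiniteSupport
  apply (Set.finite_Icc (-b) a).subset
  intro j hj
  by_contra hc
  apply hj
  rw [Set.mem_Icc, not_and_or] at hc
  rcases hc with hc | hc
  · simp [rrE_neg q (show b + j < 0 by omega)]
  · simp [rrE_neg q (show a - j < 0 by omega)]

/-- bilateral weight of the triple product -/
noncomputable def rrW (q z : ℂ) (j : ℤ) : ℂ := (-1) ^ j * z ^ j * q ^ (rrT j)

noncomputable def rrB (q : ℂ) (t : ℤ → ℂ) (a b : ℤ) : ℂ :=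
  ∑' j : ℤ, t j * (rrE q (a - j) * rrE q (b + j))

lemma rrW_succ {q z : ℂ} (h0 : q ≠ 0) (hz : z ≠ 0) (j : ℤ) :
    rrW q z (j + 1) = - z * q ^ j * rrW q z j := by
  unfold rrW
  rw [rrT_succ, zpow_add₀ h0, zpow_add₀ hz, zpow_add₀ (by norm_num)]
  simp; ring

lemma rrB_stepA {q z : ℂ} (hq : ‖q‖ < 1) (h0 : q ≠ 0) (hz : z ≠ 0) (a b : ℤ) :
    (1 - q ^ (a + b + 1)) * rrB q (rrW q z) (a + 1) b = (1 - z * q ^ a) * rrB q (rrW q z) a b := by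
  have e1 : ∀ j : ℤ, (1 - q ^ (a + b + 1)) * (rrW q z j * (rrE q (a + 1 - j) * rrE q (b + j)))
      = rrW q z j * (rrE q (a - j) * rrE q (b + j))
        + (rrW q z j * q ^ (a + 1 - j)) * (rrE q (a + 1 - j) * rrE q (b - 1 + j)) := by
    intro j
    have h1 := rrE_rec hq (a + 1 - j)
    have h2 := rrE_rec hq (b + j)
    rw [show a + 1 - j - 1 = a - j by ring] at h1
    rw [show b + j - 1 = b - 1 + j by ring] at h2
    rw [← h1, ← h2, show a + b + 1 = (a + 1 - j) + (b + j) by ring, zpow_add₀ h0]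
    ring
  have e2 : ∑' j : ℤ, (rrW q z j * q ^ (a + 1 - j)) * (rrE q (a + 1 - j) * rrE q (b - 1 + j))
      = (- z * q ^ a) * rrB q (rrW q z) a b := by
    rw [← (Equiv.addRight (1 : ℤ)).tsum_eq, rrB, ← tsum_mul_left]
    congr 1; ext j
    simp only [Equiv.coe_addRight]
    rw [rrW_succ h0 hz, show a + 1 - (j + 1) = a - j by ring, show b - 1 + (j + 1) = b + j by ring,
      zpow_sub₀ h0]
    have := zpow_ne_zero j h0
    field_simp
  rw [rrB, ← tsum_mul_left]
  simp_rw [e1]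
  rw [Summable.tsum_add (rr_summable q _ _ _) (rr_summable q (fun j => rrW q z j * q ^ (a + 1 - j)) _ _),
    e2, rrB]
  ring

lemma rrB_stepB {q z : ℂ} (hq : ‖q‖ < 1) (h0 : q ≠ 0) (hz : z ≠ 0) (a b : ℤ) :
    (1 - q ^ (a + b + 1)) * rrB q (rrW q z) a (b + 1)
      = (1 - z⁻¹ * q ^ (b + 1)) * rrB q (rrW q z) a b := by
  have e1 : ∀ j : ℤ, (1 - q ^ (a + b + 1)) * (rrW q z j * (rrE q (a - j) * rrE q (b + 1 + j)))
      = rrW q z j * (rrE q (a - j) * rrE q (b + j))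
        + (rrW q z j * q ^ (b + 1 + j)) * (rrE q (a - 1 - j) * rrE q (b + 1 + j)) := by
    intro j
    have h1 := rrE_rec hq (a - j)
    have h2 := rrE_rec hq (b + 1 + j)
    rw [show a - j - 1 = a - 1 - j by ring] at h1
    rw [show b + 1 + j - 1 = b + j by ring] at h2
    rw [← h1, ← h2, show a + b + 1 = (a - j) + (b + 1 + j) by ring, zpow_add₀ h0]
    ring
  have e2 : ∑' j : ℤ, (rrW q z j * q ^ (b + 1 + j)) * (rrE q (a - 1 - j) * rrE q (b + 1 + j))
      = (- z⁻¹ * q ^ (b + 1)) * rrB q (rrW q z) a b := by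
    rw [rrB, ← (Equiv.addRight (1 : ℤ)).tsum_eq (fun j => rrW q z j * (rrE q (a - j) * rrE q (b + j))),
      ← tsum_mul_left]
    congr 1; ext j
    simp only [Equiv.coe_addRight]
    rw [rrW_succ h0 hz, show a - (j + 1) = a - 1 - j by ring, show b + (j + 1) = b + 1 + j by ring,
      zpow_add₀ h0 (b + 1)]
    field_simp
  rw [rrB, ← tsum_mul_left]
  simp_rw [e1]
  rw [Summable.tsum_add (rr_summable q _ _ _) (rr_summable q (fun j => rrW q z j * q ^ (b + 1 + j)) _ _),
    e2, rrB]
  ring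

lemma rrB_zero {q z : ℂ} : rrB q (rrW q z) 0 0 = 1 := by
  rw [rrB, tsum_eq_single 0]
  · simp [rrW, rrT, rrE]
  · intro j hj
    rcases lt_or_gt_of_ne hj with h | h
    · rw [rrE_neg q (show 0 + j < 0 by omega)]; simp
    · rw [rrE_neg q (show 0 - j < 0 by omega)]; simp

/-- finite Jacobi triple product -/
lemma rrB_eq {q z : ℂ} (hq : ‖q‖ < 1) (h0 : q ≠ 0) (hz : z ≠ 0) (a b : ℕ) :
    rrB q (rrW q z) a b = (∏ k ∈ Finset.range a, (1 - z * q ^ k)) *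
      (∏ k ∈ Finset.range b, (1 - z⁻¹ * q ^ (k + 1))) * rrE q ((a + b : ℕ) : ℤ) := by
  have hE : ∀ n : ℕ, rrE q ((n + 1 : ℕ) : ℤ) * (1 - q ^ (n + 1)) = rrE q (n : ℤ) := by
    intro n
    have := rrE_rec hq ((n + 1 : ℕ) : ℤ)
    rw [zpow_natCast] at this
    rw [mul_comm, this]; congr 1; push_cast; ring
  induction a with
  | zero =>
    induction b with
    | zero => simpa [rrE_zero] using rrB_zero
    | succ b ih =>
      have h := rrB_stepB hq h0 hz 0 b
      have hn := rr_one_sub_ne hq b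
      rw [show (0 : ℤ) + b + 1 = ((b + 1 : ℕ) : ℤ) by push_cast; ring,
        show (b : ℤ) + 1 = ((b + 1 : ℕ) : ℤ) by push_cast; ring, zpow_natCast] at h
      apply mul_left_cancel₀ hn
      rw [Nat.cast_zero] at ih ⊢
      rw [h, ih, Finset.prod_range_succ, Nat.zero_add, Nat.zero_add, ← hE b]
      ring
  | succ a ih =>
    have h := rrB_stepA hq h0 hz a b
    have hn := rr_one_sub_ne hq (a + b)
    rw [show (a : ℤ) + b + 1 = ((a + b + 1 : ℕ) : ℤ) by push_cast; ring,
      show (a : ℤ) + 1 = ((a + 1 : ℕ) : ℤ) by push_cast; ring, zpow_natCast, zpow_natCast] at h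
    apply mul_left_cancel₀ hn
    rw [h, ih, Finset.prod_range_succ, show a + 1 + b = a + b + 1 by ring, ← hE (a + b)]
    ring

/-- q-Vandermonde kernel -/
lemma rr_vand {q : ℂ} (hq : ‖q‖ < 1) (h0 : q ≠ 0) (a : ℕ) (c : ℤ) :
    ∑' i : ℤ, (q ^ (i * (i + c)) * rrE q (i + c)) * (rrE q (a - i) * rrE q (0 + i))
      = rrE q a * rrE q (a + c) := by
  induction a generalizing c with
  | zero =>
    rw [tsum_eq_single 0]
    · simp [rrE_zero]
    · intro j hj
      rcases lt_or_gt_of_ne hj with h | h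
      · rw [rrE_neg q (show 0 + j < 0 by omega)]; simp
      · rw [rrE_neg q (show ((0 : ℕ) : ℤ) - j < 0 by push_cast; omega)]; simp
  | succ a ih =>
    have hn := rr_one_sub_ne hq a
    apply mul_left_cancel₀ hn
    have e1 : ∀ i : ℤ, (1 - q ^ (a + 1)) *
        ((q ^ (i * (i + c)) * rrE q (i + c)) * (rrE q ((a + 1 : ℕ) - i) * rrE q (0 + i)))
        = (q ^ (i * (i + c)) * rrE q (i + c)) * (rrE q (a - i) * rrE q (0 + i))
        + (q ^ (i * (i + c)) * rrE q (i + c) * q ^ ((a + 1 : ℕ) - i)) *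
          (rrE q ((a + 1 : ℕ) - i) * rrE q (-1 + i)) := by
      intro i
      have h1 := rrE_rec hq ((a + 1 : ℕ) - i)
      have h2 := rrE_rec hq (0 + i)
      rw [show ((a + 1 : ℕ) : ℤ) - i - 1 = a - i by push_cast; ring] at h1
      rw [show 0 + i - 1 = -1 + i by ring] at h2
      rw [← h1, ← h2, ← zpow_natCast q (a + 1),
        show ((a + 1 : ℕ) : ℤ) = (((a + 1 : ℕ) : ℤ) - i) + (0 + i) by ring, zpow_add₀ h0]
      ring_nf
    have e2 : ∑' i : ℤ, (q ^ (i * (i + c)) * rrE q (i + c) * q ^ ((a + 1 : ℕ) - i)) *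
          (rrE q ((a + 1 : ℕ) - i) * rrE q (-1 + i)) =
        q ^ ((a : ℤ) + 1 + c) * (rrE q a * rrE q (a + (c + 1))) := by
      rw [← (Equiv.addRight (1 : ℤ)).tsum_eq, ← ih (c + 1), ← tsum_mul_left]
      congr 1; ext i
      simp only [Equiv.coe_addRight]
      rw [show ((a + 1 : ℕ) : ℤ) - (i + 1) = a - i by push_cast; ring,
        show -1 + (i + 1) = 0 + i by ring, show i + 1 + c = i + (c + 1) by ring]
      have : q ^ ((i + 1) * (i + (c + 1))) * q ^ ((a : ℤ) - i)
          = q ^ ((a : ℤ) + 1 + c) * q ^ (i * (i + (c + 1))) := by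
        rw [← zpow_add₀ h0, ← zpow_add₀ h0]; congr 1; ring
      linear_combination (rrE q (i + (c + 1)) * (rrE q (a - i) * rrE q (0 + i))) * this
    rw [← tsum_mul_left]
    simp_rw [e1]
    rw [Summable.tsum_add (rr_summable q _ _ _)
      (rr_summable q (fun i => q ^ (i * (i + c)) * rrE q (i + c) * q ^ (((a + 1 : ℕ) : ℤ) - i)) _ _),
      e2, ih]
    have h1 := rrE_rec hq ((a + 1 : ℕ) : ℤ)
    have h2 := rrE_rec hq ((a + 1 : ℕ) + c : ℤ)
    rw [show ((a + 1 : ℕ) : ℤ) - 1 = a by push_cast; ring, zpow_natCast] at h1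
    rw [show ((a + 1 : ℕ) : ℤ) + c - 1 = a + c by push_cast; ring] at h2
    rw [← mul_assoc (1 - q ^ (a + 1)), h1, ← h2, show (a : ℤ) + (c + 1) = (a + 1 : ℕ) + c by push_cast; ring,
      show (a : ℤ) + 1 + c = (a + 1 : ℕ) + c by push_cast; ring]
    ring

lemma rr_kernel {q : ℂ} (hq : ‖q‖ < 1) (h0 : q ≠ 0) (N d : ℕ) (j : ℤ) :
    rrE q (N - j) * rrE q (N + d + j) =
      ∑' s : ℤ, q ^ ((s - j) * (s + j + d)) * (rrE q (N - s) * (rrE q (s - j) * rrE q (s + d + j))) := by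
  rcases le_or_gt j N with h | h
  · obtain ⟨a, ha⟩ : ∃ a : ℕ, (a : ℤ) = N - j := ⟨(N - j).toNat, by omega⟩
    have := rr_vand hq h0 a (2 * j + d)
    rw [show (N : ℤ) + d + j = a + (2 * j + d) by rw [ha]; ring, ← ha, ← this,
      ← (Equiv.subRight j).tsum_eq]
    congr 1; ext s
    simp only [Equiv.subRight_apply]
    rw [show (a : ℤ) - (s - j) = N - s by rw [ha]; ring, show s - j + (2 * j + d) = s + j + d by ring,
      show 0 + (s - j) = s - j by ring, show s + d + j = s + j + d by ring]
    ring
  · rw [rrE_neg q (show (N : ℤ) - j < 0 by omega), zero_mul]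
    symm
    convert tsum_zero with s
    rcases le_or_gt s N with h' | h'
    · rw [rrE_neg q (show s - j < 0 by omega)]; simp
    · rw [rrE_neg q (show (N : ℤ) - s < 0 by omega)]; simp

lemma rr_bailey {q : ℂ} (hq : ‖q‖ < 1) (h0 : q ≠ 0) (t : ℤ → ℂ) (N d : ℕ) :
    rrB q (fun j => t j * q ^ (j * j + d * j)) N (N + d) =
      ∑' s : ℤ, q ^ (s * s + d * s) * (rrE q (N - s) * rrB q t s (s + d)) := by
  have e1 : ∀ j : ℤ, t j * q ^ (j * j + d * j) * (rrE q (N - j) * rrE q (N + d + j)) =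
      ∑' s : ℤ, q ^ (s * s + d * s) * (rrE q (N - s) * (t j * (rrE q (s - j) * rrE q (s + d + j)))) := by
    intro j
    rw [rr_kernel hq h0, ← tsum_mul_left]
    congr 1; ext s
    have hx : q ^ (s * s + d * s) = q ^ (j * j + d * j) * q ^ ((s - j) * (s + j + d)) := by
      rw [← zpow_add₀ h0]; congr 1; ring
    rw [hx]
    ring
  unfold rrB
  simp_rw [e1, ← tsum_mul_left]
  apply Summable.tsum_comm
  apply summable_of_hasFiniteSupport
  apply ((Set.finite_Icc (-(d : ℤ)) N).prod (Set.finite_Icc (-(N : ℤ) - d) N)).subset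
  rintro ⟨s, j⟩ hj
  by_contra hc
  apply hj
  simp only [Function.uncurry]
  by_cases h1 : (N : ℤ) - s < 0
  · simp [rrE_neg q h1]
  by_cases h2 : s - j < 0
  · simp [rrE_neg q h2]
  by_cases h3 : s + d + j < 0
  · simp [rrE_neg q h3]
  exfalso; apply hc
  simp only [Set.mem_prod, Set.mem_Icc]
  omega

lemma rrB_neg (q : ℂ) (t : ℤ → ℂ) {a b : ℤ} (h : a + b < 0) : rrB q t a b = 0 := by
  unfold rrB
  convert tsum_zero with j
  rcases lt_or_ge (a - j) 0 with h' | h'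
  · simp [rrE_neg q h']
  · simp [rrE_neg q (show b + j < 0 by omega)]

lemma rr_delta {q : ℂ} (hq : ‖q‖ < 1) (h0 : q ≠ 0) {d : ℕ} (hd : d ≤ 1) (s : ℤ) (hs : s ≠ 0) :
    rrB q (rrW q 1) s (s + d) = 0 := by
  rcases lt_or_gt_of_ne hs with h | h
  · exact rrB_neg _ _ (by omega)
  · obtain ⟨n, rfl⟩ : ∃ n : ℕ, s = ((n + 1 : ℕ) : ℤ) := ⟨(s - 1).toNat, by omega⟩
    have := rrB_eq hq h0 one_ne_zero (n + 1) (n + 1 + d)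
    rw [Finset.prod_range_succ'] at this
    simpa using this

lemma rr_delta0 {q : ℂ} (hq : ‖q‖ < 1) (h0 : q ≠ 0) (d : ℕ) :
    rrB q (rrW q 1) 0 (0 + d) = 1 := by
  have := rrB_eq hq h0 one_ne_zero 0 d
  simp only [Nat.cast_zero, Finset.range_zero, Finset.prod_empty, Nat.zero_add, rrE_nat] at this
  rw [zero_add, this]
  have hp : ∏ k ∈ Finset.range d, (1 - q ^ (k + 1)) ≠ 0 :=
    Finset.prod_ne_zero_iff.mpr fun k _ => rr_one_sub_ne hq k
  simp [hp]

lemma rr_first {q : ℂ} (hq : ‖q‖ < 1) (h0 : q ≠ 0) {d : ℕ} (hd : d ≤ 1) (s : ℤ) :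
    rrB q (fun j => rrW q 1 j * q ^ (j * j + d * j)) s (s + d) = rrE q s := by
  rcases lt_or_ge s 0 with h | h
  · rw [rrE_neg q h, rrB_neg _ _ (by omega)]
  · lift s to ℕ using h
    rw [rr_bailey hq h0, tsum_eq_single 0]
    · rw [rr_delta0 hq h0]; simp
    · intro j hj
      rw [rr_delta hq h0 hd j hj]; simp

lemma rr_finite {q : ℂ} (hq : ‖q‖ < 1) (h0 : q ≠ 0) {d : ℕ} (hd : d ≤ 1) (N : ℕ) :
    rrB q (fun j => rrW q 1 j * q ^ (j * j + d * j) * q ^ (j * j + d * j)) N (N + d) =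
      ∑' s : ℕ, q ^ (s * s + d * s) * (rrE q (N - s) * rrE q s) := by
  rw [rr_bailey hq h0]
  simp_rw [rr_first hq h0 hd]
  rw [← (Nat.cast_injective (R := ℤ)).tsum_eq]
  · congr 1
  · intro s hs
    by_contra hc
    apply hs
    have : s < 0 := by
      by_contra h
      exact hc ⟨s.toNat, by omega⟩
    simp [rrE_neg q this]

open Filter Topology

lemma rr_summ {q : ℂ} (hq : ‖q‖ < 1) : Summable (fun n : ℕ => ‖-q ^ (n + 1)‖) := by
  simp only [norm_neg, norm_pow]
  exact (summable_nat_add_iff 1).mpr (summable_geometric_of_lt_one (norm_nonneg q) hq)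

/-- the Euler product -/
noncomputable def rrP (q : ℂ) : ℂ := ∏' k : ℕ, (1 - q ^ (k + 1))

lemma rrP_ne {q : ℂ} (hq : ‖q‖ < 1) : rrP q ≠ 0 := by
  have := tprod_one_add_ne_zero_of_summable (f := fun n : ℕ => -q ^ (n + 1))
    (fun n => by simpa [sub_eq_add_neg] using rr_one_sub_ne hq n) (rr_summ hq)
  simpa [rrP, sub_eq_add_neg] using this

/-- generic convergence of the partial products -/
lemma rr_prod_tendsto (f : ℕ → ℂ) (hf : Summable (fun n => ‖f n‖)) :
    Tendsto (fun n => ∏ k ∈ Finset.range n, (1 - f k)) atTop (𝓝 (∏' k, (1 - f k))) := by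
  have := multipliable_one_add_of_summable (f := fun n => - f n) (by simpa using hf)
  simpa [sub_eq_add_neg] using this.hasProd.tendsto_prod_nat

lemma rrE_tendsto_nat {q : ℂ} (hq : ‖q‖ < 1) :
    Tendsto (fun n : ℕ => rrE q n) atTop (𝓝 (rrP q)⁻¹) := by
  simp_rw [rrE_nat]
  exact (rr_prod_tendsto _ (by simpa using rr_summ hq)).inv₀ (rrP_ne hq)

lemma rrE_bound {q : ℂ} (hq : ‖q‖ < 1) : ∃ C, 0 ≤ C ∧ ∀ m, ‖rrE q m‖ ≤ C := by
  obtain ⟨C, hC⟩ := (Metric.isBounded_range_of_tendsto _ (rrE_tendsto_nat hq)).exists_norm_le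
  have h0 : 0 ≤ C := (norm_nonneg _).trans (hC _ ⟨0, rfl⟩)
  refine ⟨C, h0, fun m => ?_⟩
  rcases lt_or_ge m 0 with h | h
  · simpa [rrE_neg q h] using h0
  · lift m to ℕ using h
    exact hC _ ⟨m, rfl⟩

lemma rrE_tendsto {q : ℂ} (hq : ‖q‖ < 1) (c : ℤ) :
    Tendsto (fun n : ℕ => rrE q (n + c)) atTop (𝓝 (rrP q)⁻¹) := by
  have h1 : Tendsto (fun n : ℕ => ((n : ℤ) + c).toNat) atTop atTop := by
    rw [tendsto_atTop]
    intro b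
    filter_upwards [eventually_ge_atTop (b + c.natAbs)] with n hn
    omega
  refine ((rrE_tendsto_nat hq).comp h1).congr' ?_
  filter_upwards [eventually_ge_atTop c.natAbs] with n hn
  simp only [Function.comp]
  congr 1; omega

lemma rrB_tendsto {q : ℂ} (hq : ‖q‖ < 1) (t : ℤ → ℂ) (ht : Summable (fun j => ‖t j‖)) (d : ℕ) :
    Tendsto (fun N : ℕ => rrB q t N (N + d)) atTop
      (𝓝 ((∑' j, t j) * ((rrP q)⁻¹ * (rrP q)⁻¹))) := by
  obtain ⟨C, hC0, hC⟩ := rrE_bound hq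
  rw [← tsum_mul_right]
  unfold rrB
  refine tendsto_tsum_of_dominated_convergence (bound := fun j => ‖t j‖ * (C * C))
    (ht.mul_right _) ?_ ?_
  · intro j
    refine Tendsto.const_mul _ (Tendsto.mul ?_ ?_)
    · simpa [sub_eq_add_neg] using rrE_tendsto hq (-j)
    · simpa [add_assoc] using rrE_tendsto hq (d + j)
  · refine Eventually.of_forall fun N j => ?_
    rw [norm_mul, norm_mul]
    gcongr <;> apply hC

lemma rr_jtp {q z : ℂ} (hq : ‖q‖ < 1) (h0 : q ≠ 0) (hz : z ≠ 0)
    (hs : Summable (fun j => ‖rrW q z j‖)) :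
    ∑' j, rrW q z j = (∏' k : ℕ, (1 - z * q ^ k)) * (∏' k : ℕ, (1 - z⁻¹ * q ^ (k + 1))) * rrP q := by
  have h1 := rrB_tendsto hq _ hs 0
  have h2 : Tendsto (fun N : ℕ => rrB q (rrW q z) N (N + (0 : ℕ))) atTop
      (𝓝 ((∏' k : ℕ, (1 - z * q ^ k)) * (∏' k : ℕ, (1 - z⁻¹ * q ^ (k + 1))) * (rrP q)⁻¹)) := by
    have := fun N : ℕ => rrB_eq hq h0 hz N N
    simp only [Nat.cast_zero, add_zero, this]
    refine Tendsto.mul (Tendsto.mul ?_ ?_) ?_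
    · apply rr_prod_tendsto
      simp only [norm_mul, norm_pow]
      exact (summable_geometric_of_lt_one (norm_nonneg q) hq).mul_left _
    · apply rr_prod_tendsto
      simp only [norm_mul, norm_pow]
      exact ((summable_nat_add_iff 1).mpr (summable_geometric_of_lt_one (norm_nonneg q) hq)).mul_left _
    · exact (rrE_tendsto_nat hq).comp (tendsto_atTop_mono (fun n => by omega : ∀ n : ℕ, n ≤ n + n) tendsto_id)
  have h3 := tendsto_nhds_unique h1 h2
  have := rrP_ne hq
  rw [← mul_assoc] at h3
  have h4 := mul_right_cancel₀ (inv_ne_zero this) h3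
  rw [← h4, mul_assoc, inv_mul_cancel₀ this, mul_one]

lemma rr_weight {q : ℂ} (h0 : q ≠ 0) (d : ℕ) (j : ℤ) :
    rrW q 1 j * q ^ (j * j + d * j) * q ^ (j * j + d * j) = rrW (q ^ 5) (q ^ (2 + 2 * d)) j := by
  unfold rrW
  rw [one_zpow, mul_one, mul_assoc, mul_assoc, mul_assoc, ← zpow_add₀ h0, ← zpow_add₀ h0,
    ← zpow_natCast, ← zpow_natCast, ← zpow_mul, ← zpow_mul, ← zpow_add₀ h0]
  congr 2
  have := rrT_two j
  push_cast
  linear_combination (-2) * this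

lemma rr_weight_summable {q : ℂ} (hq : ‖q‖ < 1) (h0 : q ≠ 0) {d : ℕ} (hd : d ≤ 1) :
    Summable (fun j => ‖rrW (q ^ 5) (q ^ (2 + 2 * d)) j‖) := by
  have hr : 0 < ‖q‖ := norm_pos_iff.mpr h0
  have hg := summable_geometric_of_lt_one (norm_nonneg q) hq
  have hb : Summable (fun j : ℤ => ‖q‖ ^ (|j|)) := by
    apply Summable.of_nat_of_neg
    · simpa using hg
    · simpa using hg
  refine Summable.of_nonneg_of_le (fun _ => norm_nonneg _) (fun j => ?_) hb
  rw [← rr_weight h0]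
  unfold rrW
  rw [one_zpow, mul_one, mul_assoc, mul_assoc, ← zpow_add₀ h0, ← zpow_add₀ h0, norm_mul, norm_zpow,
    norm_zpow, norm_neg, norm_one, one_zpow, one_mul]
  apply zpow_le_zpow_right_of_le_one₀ hr hq.le
  have := rrT_two j
  interval_cases d
  · rcases abs_cases j with ⟨h, h'⟩ | ⟨h, h'⟩ <;> rw [h] <;> push_cast
    · rcases h'.eq_or_lt with h1 | h1
      · subst h1; simp [rrT]
      · nlinarith
    · nlinarith
  · rcases abs_cases j with ⟨h, h'⟩ | ⟨h, h'⟩ <;> rw [h] <;> push_cast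
    · nlinarith
    · nlinarith

lemma rr_sum_tendsto {q : ℂ} (hq : ‖q‖ < 1) (d : ℕ) :
    Tendsto (fun N : ℕ => ∑' s : ℕ, q ^ (s * s + d * s) * (rrE q (N - s) * rrE q s)) atTop
      (𝓝 (∑' s : ℕ, q ^ (s * s + d * s) * ((rrP q)⁻¹ * rrE q s))) := by
  obtain ⟨C, hC0, hC⟩ := rrE_bound hq
  refine tendsto_tsum_of_dominated_convergence (bound := fun s => ‖q‖ ^ s * (C * C))
    ((summable_geometric_of_lt_one (norm_nonneg q) hq).mul_right _) ?_ ?_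
  · intro s
    refine Tendsto.const_mul _ (Tendsto.mul_const _ ?_)
    simpa [sub_eq_add_neg] using rrE_tendsto hq (-s)
  · refine Eventually.of_forall fun N s => ?_
    rw [norm_mul, norm_mul, norm_pow]
    refine mul_le_mul ?_ (mul_le_mul ?_ ?_ (norm_nonneg _) hC0) (by positivity) (by positivity)
    · exact pow_le_pow_of_le_one (norm_nonneg q) hq.le (by nlinarith [Nat.le_mul_self s, Nat.zero_le (d * s)])
    · apply hC
    · apply hC

lemma rr_main {q : ℂ} (hq : ‖q‖ < 1) (h0 : q ≠ 0) {d : ℕ} (hd : d ≤ 1) :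
    (∑' s : ℕ, q ^ (s * s + d * s) / ∏ k ∈ Finset.range s, (1 - q ^ (k + 1))) * rrP q =
      (∏' k : ℕ, (1 - q ^ (5 * k + (2 + 2 * d)))) * (∏' k : ℕ, (1 - q ^ (5 * k + (3 - 2 * d))))
        * rrP (q ^ 5) := by
  have hs := rr_weight_summable hq h0 hd
  have h1 := rrB_tendsto hq _ hs d
  have h2 := rr_sum_tendsto hq d
  simp_rw [← rr_finite hq h0 hd, rr_weight h0] at h2
  have h3 := tendsto_nhds_unique h1 h2
  have hq5 : ‖q ^ 5‖ < 1 := by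
    rw [norm_pow]; exact pow_lt_one₀ (norm_nonneg q) hq (by norm_num)
  rw [rr_jtp hq5 (pow_ne_zero 5 h0) (pow_ne_zero _ h0) hs] at h3
  have e1 : ∀ k : ℕ, q ^ (2 + 2 * d) * (q ^ 5) ^ k = q ^ (5 * k + (2 + 2 * d)) := by
    intro k; rw [← pow_mul, ← pow_add, add_comm]
  have e2 : ∀ k : ℕ, (q ^ (2 + 2 * d))⁻¹ * (q ^ 5) ^ (k + 1) = q ^ (5 * k + (3 - 2 * d)) := by
    intro k
    rw [inv_mul_eq_iff_eq_mul₀ (pow_ne_zero _ h0), ← pow_mul, ← pow_add]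
    congr 1; omega
  simp_rw [e1, e2] at h3
  have e3 : (∑' s : ℕ, q ^ (s * s + d * s) * ((rrP q)⁻¹ * rrE q s)) =
      (rrP q)⁻¹ * ∑' s : ℕ, q ^ (s * s + d * s) / ∏ k ∈ Finset.range s, (1 - q ^ (k + 1)) := by
    rw [← tsum_mul_left]
    congr 1; ext s
    rw [rrE_nat]; ring
  rw [e3] at h3
  have := rrP_ne hq
  field_simp at h3
  linear_combination -h3

lemma rr_split {q : ℂ} (hq : ‖q‖ < 1) :
    rrP q = (∏' k : ℕ, (1 - q ^ (5 * k + 1))) * (∏' k : ℕ, (1 - q ^ (5 * k + 2))) *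
      (∏' k : ℕ, (1 - q ^ (5 * k + 3))) * (∏' k : ℕ, (1 - q ^ (5 * k + 4))) * rrP (q ^ 5) := by
  have hg := summable_geometric_of_lt_one (norm_nonneg q) hq
  have hr : ∀ r : ℕ, Summable (fun k : ℕ => ‖q ^ (5 * k + r)‖) := by
    intro r
    refine Summable.of_nonneg_of_le (fun _ => norm_nonneg _) (fun k => ?_) hg
    rw [norm_pow]
    exact pow_le_pow_of_le_one (norm_nonneg q) hq.le (by omega)
  have h1 : Tendsto (fun N : ℕ => ∏ k ∈ Finset.range (5 * N), (1 - q ^ (k + 1))) atTop (𝓝 (rrP q)) :=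
    (rr_prod_tendsto _ (by simpa using rr_summ hq)).comp
      (tendsto_atTop_mono (fun n => by omega : ∀ n : ℕ, n ≤ 5 * n) tendsto_id)
  have h5 : rrP (q ^ 5) = ∏' k : ℕ, (1 - q ^ (5 * k + 5)) := by
    unfold rrP
    congr 1; ext k; rw [← pow_mul]; rfl
  rw [h5]
  refine tendsto_nhds_unique h1 ?_
  refine (((((rr_prod_tendsto _ (hr 1)).mul (rr_prod_tendsto _ (hr 2))).mul
    (rr_prod_tendsto _ (hr 3))).mul (rr_prod_tendsto _ (hr 4))).mul
      (rr_prod_tendsto _ (hr 5))).congr fun N => ?_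
  induction N with
  | zero => simp
  | succ n ih =>
    rw [show 5 * (n + 1) = 5 * n + 1 + 1 + 1 + 1 + 1 by ring]
    simp only [Finset.prod_range_succ]
    rw [← ih]
    ring

lemma rr_final {q : ℂ} (hq : ‖q‖ < 1) {S a b c e : ℂ} (h : S * rrP q = a * b * rrP (q ^ 5))
    (hs : rrP q = c * a * b * e * rrP (q ^ 5)) : S = 1 / (c * e) := by
  have hne := rrP_ne hq
  rw [hs] at hne h
  simp only [mul_ne_zero_iff] at hne
  obtain ⟨⟨⟨⟨h1, h2⟩, h3⟩, h4⟩, h5⟩ := hne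
  rw [eq_div_iff (mul_ne_zero h1 h4)]
  apply mul_right_cancel₀ (mul_ne_zero (mul_ne_zero h2 h3) h5)
  linear_combination h

/-- The Rogers–Ramanujan identities in product form:
`G(q) = ∑_{n≥0} q^(n²)/(q;q)_n = 1/((q;q⁵)_∞ (q⁴;q⁵)_∞)` and
`H(q) = ∑_{n≥0} q^(n(n+1))/(q;q)_n = 1/((q²;q⁵)_∞ (q³;q⁵)_∞)`. -/
theorem rogers_ramanujan (q : ℂ) (hq : ‖q‖ < 1) :
    (∑' n : ℕ, q ^ (n ^ 2) / ∏ k ∈ Finset.range n, (1 - q ^ (k + 1))) =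
        1 / ((∏' k : ℕ, (1 - q ^ (5 * k + 1))) * ∏' k : ℕ, (1 - q ^ (5 * k + 4))) ∧
      (∑' n : ℕ, q ^ (n * (n + 1)) / ∏ k ∈ Finset.range n, (1 - q ^ (k + 1))) =
        1 / ((∏' k : ℕ, (1 - q ^ (5 * k + 2))) * ∏' k : ℕ, (1 - q ^ (5 * k + 3))) := by
  by_cases h0 : q = 0
  · subst h0
    constructor
    · rw [tsum_eq_single 0 (fun n hn => by simp [hn])]; simp
    · rw [tsum_eq_single 0 (fun n hn => by simp [hn])]; simp
  · have hs := rr_split hq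
    constructor
    · have h := rr_main hq h0 (d := 0) (by norm_num)
      simp only [zero_mul, mul_zero, add_zero, Nat.sub_zero] at h
      simp only [pow_two]
      exact rr_final hq h hs
    · have h := rr_main hq h0 (d := 1) (by norm_num)
      simp only [one_mul, mul_one, Nat.reduceAdd, Nat.reduceSub] at h
      simp only [mul_add, mul_one]
      exact rr_final hq (a := ∏' k : ℕ, (1 - q ^ (5 * k + 1))) (b := ∏' k : ℕ, (1 - q ^ (5 * k + 4)))
        (by rw [h]; ring) (by rw [hs]; ring)
end

section
/- G(q²)G(q³) + qH(q²)H(q³) = χ(−q³)/χ(−q), where χ(q) = (−q;q²)_∞ and G, H are the Rogers–Ramanujan series. -/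
/-- Rogers–Ramanujan series `G` in product form: `G(q) = 1/((q;q⁵)_∞ (q⁴;q⁵)_∞)`. -/
noncomputable def RRG (q : ℂ) : ℂ :=
  1 / ((∏' k : ℕ, (1 - q ^ (5 * k + 1))) * ∏' k : ℕ, (1 - q ^ (5 * k + 4)))

/-- Rogers–Ramanujan series `H` in product form: `H(q) = 1/((q²;q⁵)_∞ (q³;q⁵)_∞)`. -/
noncomputable def RRH (q : ℂ) : ℂ :=
  1 / ((∏' k : ℕ, (1 - q ^ (5 * k + 2))) * ∏' k : ℕ, (1 - q ^ (5 * k + 3)))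

/-- `χ(q) = (−q;q²)_∞ = ∏_{n≥0}(1 + q^(2n+1))`. -/
noncomputable def rchi (q : ℂ) : ℂ := ∏' n : ℕ, (1 + q ^ (2 * n + 1))

open Filter Topology

/-- finite q-factorial -/
noncomputable def jF (P : ℂ) (n : ℕ) : ℂ := ∏ k ∈ Finset.range n, (1 - P ^ (k + 1))

/-- reciprocal q-factorial on the integers, zero at negative integers -/
noncomputable def jR (P : ℂ) (m : ℤ) : ℂ := if 0 ≤ m then (jF P m.toNat)⁻¹ else 0

/-- the theta term -/
noncomputable def jc (z P : ℂ) (n : ℤ) : ℂ := z ^ n * P ^ (n * (n - 1) / 2)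

/-- infinite product -/
noncomputable def jE (P : ℂ) : ℂ := ∏' k : ℕ, (1 - P ^ (k + 1))

lemma one_sub_pow_ne {P : ℂ} (hP : ‖P‖ < 1) (k : ℕ) (hk : k ≠ 0) : 1 - P ^ k ≠ 0 := by
  intro h
  have h1 : P ^ k = 1 := by linear_combination -h
  have h2 : ‖P‖ ^ k < 1 := pow_lt_one₀ (norm_nonneg _) hP hk
  rw [← norm_pow, h1] at h2
  simp at h2

lemma jF_ne {P : ℂ} (hP : ‖P‖ < 1) (n : ℕ) : jF P n ≠ 0 := by
  unfold jF
  exact Finset.prod_ne_zero_iff.2 fun k _ => one_sub_pow_ne hP _ (Nat.succ_ne_zero k)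

lemma jR_rec {P : ℂ} (hP : ‖P‖ < 1) (m : ℤ) : jR P (m - 1) = jR P m * (1 - P ^ m) := by
  rcases lt_trichotomy m 0 with h | h | h
  · simp [jR, not_le.2 h, show ¬ (1 ≤ m) by omega]
  · subst h; simp [jR]
  · obtain ⟨k, rfl⟩ : ∃ k : ℕ, m = k + 1 := ⟨(m - 1).toNat, by omega⟩
    have e1 : ((k : ℤ) + 1 - 1).toNat = k := by omega
    have e2 : ((k : ℤ) + 1).toNat = k + 1 := by omega
    have h3 : jF P (k + 1) = jF P k * (1 - P ^ (k + 1)) := by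
      simp [jF, Finset.prod_range_succ]
    have h4 := one_sub_pow_ne hP (k + 1) (Nat.succ_ne_zero k)
    have h5 := jF_ne hP k
    rw [jR, jR, if_pos (by omega), if_pos (by omega), e1, e2, h3]
    have : P ^ ((k : ℤ) + 1) = P ^ (k + 1) := by exact_mod_cast zpow_natCast P (k + 1)
    rw [this]
    field_simp

lemma jc_succ {z P : ℂ} (hz : z ≠ 0) (hP : P ≠ 0) (n : ℤ) :
    jc z P (n + 1) = jc z P n * (z * P ^ n) := by
  have : (n + 1) * (n + 1 - 1) / 2 = n * (n - 1) / 2 + n := by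
    rw [show (n + 1) * (n + 1 - 1) = n * (n - 1) + n * 2 by ring,
      Int.add_mul_ediv_right _ _ (by norm_num)]
  rw [jc, jc, this, zpow_add₀ hz, zpow_add₀ hP, zpow_one]
  ring

/-- terms of the finite Jacobi sum -/
noncomputable def jT (z P : ℂ) (M N : ℕ) (n : ℤ) : ℂ :=
  jF P (M + N) * jR P (M - n) * jR P (N + n) * jc z P n

lemma jT_summable (z P : ℂ) (M N : ℕ) : Summable (jT z P M N) := by
  apply summable_of_ne_finset_zero (s := Finset.Icc (-(N : ℤ)) M)
  intro n hn
  rw [Finset.mem_Icc, not_and_or] at hn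
  rcases hn with h | h
  · simp [jT, jR, show ¬ (0 ≤ (N : ℤ) + n) by omega]
  · simp [jT, jR, show ¬ (n ≤ M) by omega]

lemma jF_succ (P : ℂ) (n : ℕ) : jF P (n + 1) = jF P n * (1 - P ^ (n + 1)) := by
  simp [jF, Finset.prod_range_succ]

lemma stepM {z P : ℂ} (hz : z ≠ 0) (hP0 : P ≠ 0) (hP : ‖P‖ < 1) (M N : ℕ) :
    ∑' n, jT z P (M + 1) N n = (1 + z * P ^ M) * ∑' n, jT z P M N n := by
  have hs := jT_summable z P M N
  have key : ∀ n, jT z P (M + 1) N n = jT z P M N n + z * P ^ M * jT z P M N (n - 1) := by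
    intro n
    have h1 := jR_rec hP ((M : ℤ) + 1 - n)
    have h2 := jR_rec hP ((N : ℤ) + n)
    have h3 := jc_succ hz hP0 (n - 1)
    rw [sub_add_cancel] at h3
    rw [show (M : ℤ) + 1 - n - 1 = M - n by ring] at h1
    simp only [jT]
    rw [show M + 1 + N = (M + N) + 1 by ring, jF_succ,
      show (M : ℤ) - (n - 1) = M + 1 - n by ring,
      show (N : ℤ) + (n - 1) = N + n - 1 by ring, h1, h2, h3,
      show ((M + 1 : ℕ) : ℤ) - n = M + 1 - n by push_cast; ring]
    have e1 : P ^ (M + N + 1) = P ^ ((M : ℤ) + 1 - n) * P ^ ((N : ℤ) + n) := by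
      rw [← zpow_add₀ hP0, ← zpow_natCast]; congr 1; push_cast; ring
    have e2 : P ^ ((M : ℤ) + 1 - n) * P ^ (n - 1) = P ^ M := by
      rw [← zpow_add₀ hP0, ← zpow_natCast]; congr 1; ring
    rw [e1, ← e2]
    have e3 : P ^ (n - 1) ≠ 0 := zpow_ne_zero _ hP0
    ring
  have hs' : Summable fun n => jT z P M N (n - 1) := (Equiv.subRight (1 : ℤ)).summable_iff.2 hs
  have ht : ∑' n, jT z P M N (n - 1) = ∑' n, jT z P M N n :=
    (Equiv.subRight (1 : ℤ)).tsum_eq (jT z P M N)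
  rw [tsum_congr key, hs.tsum_add (hs'.mul_left _), tsum_mul_left, ht]
  ring

lemma stepN {z P : ℂ} (hz : z ≠ 0) (hP0 : P ≠ 0) (hP : ‖P‖ < 1) (M N : ℕ) :
    ∑' n, jT z P M (N + 1) n = (1 + z⁻¹ * P ^ (N + 1)) * ∑' n, jT z P M N n := by
  have hs := jT_summable z P M N
  have key : ∀ n, jT z P M (N + 1) n =
      jT z P M N n + z⁻¹ * P ^ (N + 1) * jT z P M N (n + 1) := by
    intro n
    have h1 := jR_rec hP ((N : ℤ) + 1 + n)
    have h2 := jR_rec hP ((M : ℤ) - n)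
    have h3 := jc_succ hz hP0 n
    rw [show (N : ℤ) + 1 + n - 1 = N + n by ring] at h1
    simp only [jT]
    rw [show M + (N + 1) = (M + N) + 1 by ring, jF_succ,
      show (M : ℤ) - (n + 1) = M - n - 1 by ring,
      show (N : ℤ) + (n + 1) = N + 1 + n by ring, h1, h2, h3,
      show ((N + 1 : ℕ) : ℤ) + n = N + 1 + n by push_cast; ring]
    have e1 : P ^ (M + N + 1) = P ^ ((N : ℤ) + 1 + n) * P ^ ((M : ℤ) - n) := by
      rw [← zpow_add₀ hP0, ← zpow_natCast]; congr 1; push_cast; ring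
    have e2 : P ^ (N + 1) * P ^ n = P ^ ((N : ℤ) + 1 + n) := by
      rw [← zpow_natCast, ← zpow_add₀ hP0]; congr 1
    have e3 : z⁻¹ * z = 1 := inv_mul_cancel₀ hz
    rw [e1, ← e2]
    linear_combination (-(P ^ (N + 1) * P ^ n * jF P (M + N) * (jR P (M - n) * (1 - P ^ ((M : ℤ) - n))) * jR P (N + 1 + n) * jc z P n)) * e3
  have hs' : Summable fun n => jT z P M N (n + 1) := (Equiv.addRight (1 : ℤ)).summable_iff.2 hs
  have ht : ∑' n, jT z P M N (n + 1) = ∑' n, jT z P M N n :=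
    (Equiv.addRight (1 : ℤ)).tsum_eq (jT z P M N)
  rw [tsum_congr key, hs.tsum_add (hs'.mul_left _), tsum_mul_left, ht]
  ring

lemma finJ {z P : ℂ} (hz : z ≠ 0) (hP0 : P ≠ 0) (hP : ‖P‖ < 1) (N : ℕ) :
    ∑' n, jT z P N N n = (∏ k ∈ Finset.range N, (1 + z * P ^ k)) *
      ∏ k ∈ Finset.range N, (1 + z⁻¹ * P ^ (k + 1)) := by
  induction N with
  | zero =>
    rw [tsum_eq_single 0]
    · simp [jT, jR, jF, jc]
    · intro n hn
      rcases lt_or_gt_of_ne hn with h | h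
      · simp [jT, jR, not_le.2 h]
      · simp [jT, jR, not_le.2 h]
  | succ N ih =>
    rw [stepM hz hP0 hP, stepN hz hP0 hP, ih, Finset.prod_range_succ, Finset.prod_range_succ]
    ring

lemma summ_pow {P : ℂ} (hP : ‖P‖ < 1) (z : ℂ) (d r : ℕ) (hd : d ≠ 0) :
    Summable fun k : ℕ => ‖z * P ^ (d * k + r)‖ := by
  have h : ‖P‖ ^ d < 1 := pow_lt_one₀ (norm_nonneg _) hP hd
  have := (summable_geometric_of_lt_one (by positivity) h).mul_left (‖z‖ * ‖P‖ ^ r)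
  refine this.congr fun k => ?_
  rw [norm_mul, norm_pow, pow_add, pow_mul]; ring

lemma mult_pow {P : ℂ} (hP : ‖P‖ < 1) (z : ℂ) (d r : ℕ) (hd : d ≠ 0) :
    Multipliable fun k : ℕ => 1 + z * P ^ (d * k + r) :=
  multipliable_one_add_of_summable (summ_pow hP z d r hd)

lemma mult_sub {P : ℂ} (hP : ‖P‖ < 1) (d r : ℕ) (hd : d ≠ 0) :
    Multipliable fun k : ℕ => 1 - P ^ (d * k + r) := by
  simpa [sub_eq_add_neg] using mult_pow hP (-1) d r hd

lemma tprod_sub_ne {P : ℂ} (hP : ‖P‖ < 1) (d r : ℕ) (hd : d ≠ 0) (hr : r ≠ 0) :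
    ∏' k : ℕ, (1 - P ^ (d * k + r)) ≠ 0 := by
  have := tprod_one_add_ne_zero_of_summable (f := fun k : ℕ => (-1) * P ^ (d * k + r))
    (fun k => by
      have := one_sub_pow_ne hP (d * k + r) (by omega)
      simpa [sub_eq_add_neg] using this) (summ_pow hP (-1) d r hd)
  simpa [sub_eq_add_neg] using this

lemma jE_ne {P : ℂ} (hP : ‖P‖ < 1) : jE P ≠ 0 := by
  simpa [jE] using tprod_sub_ne hP 1 1 one_ne_zero one_ne_zero

lemma jF_tendsto {P : ℂ} (hP : ‖P‖ < 1) : Tendsto (jF P) atTop (𝓝 (jE P)) := by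
  have : Multipliable fun k : ℕ => 1 - P ^ (k + 1) := by
    simpa using mult_sub hP 1 1 one_ne_zero
  exact this.hasProd.tendsto_prod_nat

lemma jR_tendsto {P : ℂ} (hP : ‖P‖ < 1) (n : ℤ) :
    Tendsto (fun N : ℕ => jR P (N + n)) atTop (𝓝 (jE P)⁻¹) := by
  have h1 : Tendsto (fun m : ℕ => (jF P m)⁻¹) atTop (𝓝 (jE P)⁻¹) :=
    (jF_tendsto hP).inv₀ (jE_ne hP)
  have h2 : Tendsto (fun N : ℕ => ((N : ℤ) + n).toNat) atTop atTop := by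
    apply tendsto_atTop_mono (f := fun N : ℕ => N - n.natAbs)
    · intro N; omega
    · exact tendsto_sub_atTop_nat _
  refine (h1.comp h2).congr' ?_
  filter_upwards [eventually_ge_atTop n.natAbs] with N hN
  simp [jR, show 0 ≤ (N : ℤ) + n by omega]

lemma jF_bdd {P : ℂ} (hP : ‖P‖ < 1) : ∃ C, ∀ n, ‖jF P n‖ ≤ C := by
  obtain ⟨C, hC⟩ := (jF_tendsto hP).norm.bddAbove_range
  exact ⟨C, fun n => hC ⟨n, rfl⟩⟩

lemma jR_bdd {P : ℂ} (hP : ‖P‖ < 1) : ∃ C, 0 ≤ C ∧ ∀ n, ‖jR P n‖ ≤ C := by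
  obtain ⟨C, hC⟩ := ((jF_tendsto hP).inv₀ (jE_ne hP)).norm.bddAbove_range
  refine ⟨C, (norm_nonneg _).trans (hC ⟨0, rfl⟩), fun n => ?_⟩
  unfold jR
  split_ifs
  · exact hC ⟨n.toNat, rfl⟩
  · simpa using (norm_nonneg _).trans (hC ⟨0, rfl⟩)

lemma jc_summable {z P : ℂ} (hz : z ≠ 0) (hP0 : P ≠ 0) (hP : ‖P‖ < 1) :
    Summable fun n => ‖jc z P n‖ := by
  have hne : ∀ n, jc z P n ≠ 0 := fun n => mul_ne_zero (zpow_ne_zero _ hz) (zpow_ne_zero _ hP0)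
  have hp : Tendsto (fun n : ℕ => ‖P‖ ^ n) atTop (𝓝 0) :=
    tendsto_pow_atTop_nhds_zero_of_lt_one (norm_nonneg _) hP
  apply Summable.of_nat_of_neg
  · apply summable_of_ratio_test_tendsto_lt_one (l := 0) one_pos
    · exact Eventually.of_forall fun n => by simpa using hne n
    · have := hp.const_mul ‖z‖
      rw [mul_zero] at this
      refine this.congr fun n => ?_
      push_cast
      rw [jc_succ hz hP0]
      have := hne n
      simp only [norm_norm, norm_mul, zpow_natCast, norm_pow]
      field_simp
  · apply summable_of_ratio_test_tendsto_lt_one (l := 0) one_pos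
    · exact Eventually.of_forall fun n => by simpa using hne _
    · have := (hp.const_mul (‖P‖ / ‖z‖))
      rw [mul_zero] at this
      refine this.congr fun n => ?_
      have h := jc_succ hz hP0 (-((n : ℤ) + 1))
      rw [show -((n : ℤ) + 1) + 1 = -n by ring] at h
      have h6 := hne (-((n : ℤ) + 1))
      push_cast
      rw [h]
      rw [zpow_neg, show ((n : ℤ) + 1) = ((n + 1 : ℕ) : ℤ) by push_cast; ring, zpow_natCast] at *
      simp only [norm_norm, norm_mul, norm_inv, norm_pow]
      have h7 := norm_ne_zero_iff.2 hz
      have h8 := norm_ne_zero_iff.2 hP0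
      have h9 := norm_ne_zero_iff.2 h6
      field_simp
      ring

/-- Jacobi triple product -/
lemma jacobi {z P : ℂ} (hz : z ≠ 0) (hP0 : P ≠ 0) (hP : ‖P‖ < 1) :
    ∑' n, jc z P n = jE P * ((∏' k : ℕ, (1 + z * P ^ k)) * ∏' k : ℕ, (1 + z⁻¹ * P ^ (k + 1))) := by
  have m1 : Multipliable fun k : ℕ => 1 + z * P ^ k := by
    simpa using mult_pow hP z 1 0 one_ne_zero
  have m2 : Multipliable fun k : ℕ => 1 + z⁻¹ * P ^ (k + 1) := by
    simpa using mult_pow hP z⁻¹ 1 1 one_ne_zero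
  have l1 := m1.hasProd.tendsto_prod_nat.mul m2.hasProd.tendsto_prod_nat
  obtain ⟨C, hC⟩ := jF_bdd hP
  obtain ⟨D, hD0, hD⟩ := jR_bdd hP
  have l2 : Tendsto (fun N : ℕ => ∑' n, jT z P N N n) atTop
      (𝓝 (∑' n, jE P * (jE P)⁻¹ * (jE P)⁻¹ * jc z P n)) := by
    apply tendsto_tsum_of_dominated_convergence (bound := fun n => C * D * D * ‖jc z P n‖)
    · exact (jc_summable hz hP0 hP).mul_left _
    · intro n
      have a1 : Tendsto (fun N : ℕ => jF P (N + N)) atTop (𝓝 (jE P)) :=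
        (jF_tendsto hP).comp (tendsto_atTop_mono (fun N => Nat.le_add_left N N) tendsto_id)
      have a2 := jR_tendsto hP (-n)
      have a3 := jR_tendsto hP n
      simpa [jT, sub_eq_add_neg] using ((a1.mul a2).mul a3).mul_const (jc z P n)
    · refine Eventually.of_forall fun N n => ?_
      simp only [jT, norm_mul]
      have := (norm_nonneg _).trans (hC 0)
      gcongr
      · exact hC _
      · exact hD _
      · exact hD _
  have := tendsto_nhds_unique (l1.congr fun N => (finJ hz hP0 hP N).symm) l2
  rw [this, tsum_mul_left]
  have := jE_ne hP
  field_simp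

lemma jc_neg {q : ℂ} (hq : q ≠ 0) (k l : ℕ) (n : ℤ) :
    jc (-q ^ k) (q ^ l) n = (-1) ^ n * q ^ (k * n + l * (n * (n - 1) / 2)) := by
  rw [jc, neg_eq_neg_one_mul, mul_zpow, zpow_add₀ hq, zpow_mul, zpow_mul, zpow_natCast, zpow_natCast]
  ring

lemma half_spec (n : ℤ) : 2 * (n * (n - 1) / 2) = n * (n - 1) :=
  Int.mul_ediv_cancel' (by
    rcases Int.even_or_odd n with h | h
    · exact h.two_dvd.mul_right _
    · exact (h.sub_odd odd_one).two_dvd.mul_left _)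

/-- the regrouping of pairs of integers -/
def jEquiv : Fin 5 × (ℤ × ℤ) ≃ ℤ × ℤ where
  toFun p := (2 * p.2.1 + 3 * p.2.2 + p.1.val - 1, p.2.1 - p.2.2)
  invFun r := (⟨((r.1 + 3 * r.2 + 1) % 5).toNat, by omega⟩,
    ((r.1 + 3 * r.2 + 1) / 5, (r.1 + 3 * r.2 + 1) / 5 - r.2))
  left_inv := by
    rintro ⟨⟨i, hi⟩, a, b⟩
    simp only [Prod.mk.injEq, Fin.mk.injEq]
    omega
  right_inv := by
    rintro ⟨m, n⟩
    simp only [Prod.mk.injEq]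
    omega

/-- constant exponents -/
def jK (i : ℕ) : ℕ := ![1, 0, 0, 1, 3] (Fin.ofNat 5 i)

lemma jterm {q : ℂ} (hq : q ≠ 0) (i : Fin 5) (a b : ℤ) :
    jc 1 q (2 * a + 3 * b + i.val - 1) * jc (-q ^ 3) (q ^ 6) (a - b) =
      q ^ jK i.val * (jc (-(q ^ 2) ^ (i.val + 1)) ((q ^ 2) ^ 5) a *
        jc (-(q ^ 3) ^ (i.val + 1)) ((q ^ 3) ^ 5) b) := by
  have h1 : ∀ m, jc 1 q m = q ^ (m * (m - 1) / 2) := fun m => by simp [jc]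
  have hs : ((-1 : ℂ)) ^ (a - b) = (-1) ^ a * (-1) ^ b := by
    rw [sub_eq_add_neg, zpow_add₀ (by norm_num), zpow_neg, ← inv_zpow]
    norm_num
  have hK : 2 * (jK i.val : ℤ) = ((i.val : ℤ) - 1) * (i.val - 2) := by
    fin_cases i <;> simp [jK, Fin.ofNat] 
  rw [h1, ← pow_mul, ← pow_mul, ← pow_mul, ← pow_mul, jc_neg hq, jc_neg hq, jc_neg hq, hs]
  set m := 2 * a + 3 * b + (i.val : ℤ) - 1 with hm
  have e0 := half_spec m
  have e1 := half_spec (a - b)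
  have e2 := half_spec a
  have e3 := half_spec b
  have : m * (m - 1) / 2 + (((3 : ℕ) : ℤ) * (a - b) + ((6 : ℕ) : ℤ) * ((a - b) * (a - b - 1) / 2)) =
      (jK i.val : ℤ) + (((2 * (i.val + 1) : ℕ) : ℤ) * a + ((2 * 5 : ℕ) : ℤ) * (a * (a - 1) / 2)) +
       (((3 * (i.val + 1) : ℕ) : ℤ) * b + ((3 * 5 : ℕ) : ℤ) * (b * (b - 1) / 2)) := by
    apply mul_left_cancel₀ (two_ne_zero (α := ℤ))
    rw [hm] at e0 ⊢
    push_cast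
    linear_combination e0 + 6 * e1 - hK - 10 * e2 - 15 * e3
  have h2 := congrArg (fun t : ℤ => q ^ t) this
  simp only [zpow_add₀ hq, zpow_natCast] at h2 ⊢
  linear_combination ((-1) ^ a * (-1) ^ b) * h2

lemma regroup {q : ℂ} (hq0 : q ≠ 0) (hq : ‖q‖ < 1) :
    (∑' n, jc 1 q n) * (∑' n, jc (-q ^ 3) (q ^ 6) n) =
      ∑ i : Fin 5, q ^ jK i.val * ((∑' n, jc (-(q ^ 2) ^ (i.val + 1)) ((q ^ 2) ^ 5) n) *
        ∑' n, jc (-(q ^ 3) ^ (i.val + 1)) ((q ^ 3) ^ 5) n) := by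
  have hp : ∀ k : ℕ, k ≠ 0 → ‖q ^ k‖ < 1 := fun k hk => by
    rw [norm_pow]; exact pow_lt_one₀ (norm_nonneg _) hq hk
  have s1 := jc_summable one_ne_zero hq0 hq
  have s2 := jc_summable (z := -q ^ 3) (P := q ^ 6) (by simpa using hq0) (by simpa using hq0)
    (hp 6 (by norm_num))
  have s3 : ∀ i : Fin 5, Summable fun n => ‖jc (-(q ^ 2) ^ (i.val + 1)) ((q ^ 2) ^ 5) n‖ := fun i =>
    jc_summable (neg_ne_zero.2 (pow_ne_zero _ (pow_ne_zero _ hq0)))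
      (pow_ne_zero _ (pow_ne_zero _ hq0)) (by rw [← pow_mul]; exact hp _ (by norm_num))
  have s4 : ∀ i : Fin 5, Summable fun n => ‖jc (-(q ^ 3) ^ (i.val + 1)) ((q ^ 3) ^ 5) n‖ := fun i =>
    jc_summable (neg_ne_zero.2 (pow_ne_zero _ (pow_ne_zero _ hq0)))
      (pow_ne_zero _ (pow_ne_zero _ hq0)) (by rw [← pow_mul]; exact hp _ (by norm_num))
  have s5 := (summable_mul_of_summable_norm s1 s2)
  rw [tsum_mul_tsum_of_summable_norm s1 s2, ← jEquiv.tsum_eq]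
  refine (jEquiv.summable_iff.2 s5).tsum_prod.trans ?_
  rw [tsum_fintype]
  refine Finset.sum_congr rfl fun i _ => ?_
  rw [tsum_mul_tsum_of_summable_norm (s3 i) (s4 i), ← tsum_mul_left]
  refine tsum_congr fun p => ?_
  exact jterm hq0 i p.1 p.2

lemma tprod_split {f : ℕ → ℂ} (hf : Multipliable f) (d : ℕ) (hd : 0 < d)
    (hg : ∀ i < d, Multipliable fun k => f (d * k + i)) :
    ∏' k, f k = ∏ i ∈ Finset.range d, ∏' k, f (d * k + i) := by
  have h1 : ∀ N, ∏ k ∈ Finset.range (d * N), f k =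
      ∏ i ∈ Finset.range d, ∏ k ∈ Finset.range N, f (d * k + i) := by
    intro N
    rw [Finset.prod_comm]
    induction N with
    | zero => simp
    | succ N ih => rw [Nat.mul_succ, Finset.prod_range_add, ih, Finset.prod_range_succ]
  have l1 : Tendsto (fun N => ∏ k ∈ Finset.range (d * N), f k) atTop (𝓝 (∏' k, f k)) :=
    hf.hasProd.tendsto_prod_nat.comp
      (tendsto_atTop_mono (fun N => Nat.le_mul_of_pos_left N hd) tendsto_id)
  have l2 : Tendsto (fun N => ∏ i ∈ Finset.range d, ∏ k ∈ Finset.range N, f (d * k + i)) atTop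
      (𝓝 (∏ i ∈ Finset.range d, ∏' k, f (d * k + i))) :=
    tendsto_finsetProd _ fun i hi => (hg i (Finset.mem_range.1 hi)).hasProd.tendsto_prod_nat
  exact tendsto_nhds_unique (l1.congr h1) l2

lemma jE_split {P : ℂ} (hP : ‖P‖ < 1) (d : ℕ) (hd : 0 < d) :
    jE P = ∏ i ∈ Finset.range d, ∏' k : ℕ, (1 - P ^ (d * k + (i + 1))) := by
  unfold jE
  rw [tprod_split (by simpa using mult_sub hP 1 1 one_ne_zero) d hd]
  · rfl
  · intro i _
    exact mult_sub hP d (i + 1) hd.ne'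

/-- Jacobi product with base `x^5` -/
lemma jacobi_five {x : ℂ} (hx0 : x ≠ 0) (hx : ‖x‖ < 1) (i j : ℕ) (hij : i + j = 5) :
    ∑' n, jc (-x ^ i) (x ^ 5) n = (∏' k : ℕ, (1 - x ^ (5 * k + 5))) *
      ((∏' k : ℕ, (1 - x ^ (5 * k + i))) * ∏' k : ℕ, (1 - x ^ (5 * k + j))) := by
  rw [jacobi (neg_ne_zero.2 (pow_ne_zero _ hx0)) (pow_ne_zero _ hx0)
    (by rw [norm_pow]; exact pow_lt_one₀ (norm_nonneg _) hx (by norm_num)), jE]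
  congr 1
  · refine tprod_congr fun k => ?_
    rw [← pow_mul]; ring_nf
  congr 1
  · refine tprod_congr fun k => ?_
    rw [← pow_mul, pow_add]; ring
  · refine tprod_congr fun k => ?_
    have : x ^ (5 * (k + 1)) = x ^ i * x ^ (5 * k + j) := by
      rw [← pow_add]; congr 1; omega
    rw [← pow_mul, this, inv_neg]
    have := pow_ne_zero i hx0
    field_simp
    ring

lemma fiveG {x : ℂ} (hx : ‖x‖ < 1) :
    jE x * RRG x = (∏' k : ℕ, (1 - x ^ (5 * k + 5))) *
      ((∏' k : ℕ, (1 - x ^ (5 * k + 2))) * ∏' k : ℕ, (1 - x ^ (5 * k + 3))) := by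
  have h1 := tprod_sub_ne hx 5 1 (by norm_num) (by norm_num)
  have h4 := tprod_sub_ne hx 5 4 (by norm_num) (by norm_num)
  rw [jE_split hx 5 (by norm_num), RRG]
  simp only [Finset.prod_range_succ, Finset.prod_range_zero, zero_add, one_mul, Nat.reduceAdd]
  field_simp

lemma fiveH {x : ℂ} (hx : ‖x‖ < 1) :
    jE x * RRH x = (∏' k : ℕ, (1 - x ^ (5 * k + 5))) *
      ((∏' k : ℕ, (1 - x ^ (5 * k + 1))) * ∏' k : ℕ, (1 - x ^ (5 * k + 4))) := by
  have h1 := tprod_sub_ne hx 5 2 (by norm_num) (by norm_num)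
  have h4 := tprod_sub_ne hx 5 3 (by norm_num) (by norm_num)
  rw [jE_split hx 5 (by norm_num), RRH]
  simp only [Finset.prod_range_succ, Finset.prod_range_zero, zero_add, one_mul, Nat.reduceAdd]
  field_simp

lemma five_cases {x : ℂ} (hx0 : x ≠ 0) (hx : ‖x‖ < 1) :
    (∑' n, jc (-x ^ 1) (x ^ 5) n = jE x * RRH x) ∧
    (∑' n, jc (-x ^ 2) (x ^ 5) n = jE x * RRG x) ∧
    (∑' n, jc (-x ^ 3) (x ^ 5) n = jE x * RRG x) ∧
    (∑' n, jc (-x ^ 4) (x ^ 5) n = jE x * RRH x) ∧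
    (∑' n, jc (-x ^ 5) (x ^ 5) n = 0) := by
  refine ⟨?_, ?_, ?_, ?_, ?_⟩
  · rw [jacobi_five hx0 hx 1 4 rfl, fiveH hx]
  · rw [jacobi_five hx0 hx 2 3 rfl, fiveG hx]
  · rw [jacobi_five hx0 hx 3 2 rfl, fiveG hx]; ring
  · rw [jacobi_five hx0 hx 4 1 rfl, fiveH hx]; ring
  · rw [jacobi_five hx0 hx 5 0 rfl]
    have : ∏' k : ℕ, (1 - x ^ (5 * k + 0)) = 0 :=
      tprod_of_exists_eq_zero ⟨0, by simp⟩
    rw [this]; ring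

lemma chi_eq (y : ℂ) : rchi (-y) = ∏' k : ℕ, (1 - y ^ (2 * k + 1)) := by
  refine tprod_congr fun k => ?_
  rw [Odd.neg_pow ⟨k, rfl⟩]; ring

lemma sq_lt {y : ℂ} (hy : ‖y‖ < 1) : ‖y ^ 2‖ < 1 := by
  rw [norm_pow]; exact pow_lt_one₀ (norm_nonneg _) hy (by norm_num)

lemma E_chi {y : ℂ} (hy : ‖y‖ < 1) : jE y = jE (y ^ 2) * rchi (-y) := by
  rw [jE_split hy 2 (by norm_num), chi_eq, jE]
  simp only [Finset.prod_range_succ, Finset.prod_range_zero, zero_add, one_mul, Nat.reduceAdd]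
  rw [mul_comm]
  congr 1
  refine tprod_congr fun k => ?_
  rw [← pow_mul]; ring_nf

lemma E_D {y : ℂ} (hy : ‖y‖ < 1) : jE (y ^ 2) = jE y * ∏' k : ℕ, (1 + y ^ (k + 1)) := by
  rw [jE, jE, ← Multipliable.tprod_mul]
  · refine tprod_congr fun k => ?_
    rw [← pow_mul]; ring
  · simpa using mult_sub hy 1 1 one_ne_zero
  · simpa using mult_pow hy 1 1 1 one_ne_zero

lemma phi_eq {y : ℂ} (hy0 : y ≠ 0) (hy : ‖y‖ < 1) :
    ∑' n, jc (-y) (y ^ 2) n = jE y * rchi (-y) := by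
  rw [jacobi (neg_ne_zero.2 hy0) (pow_ne_zero _ hy0) (sq_lt hy), E_chi hy, chi_eq]
  have h1 : ∏' k : ℕ, (1 + -y * (y ^ 2) ^ k) = ∏' k : ℕ, (1 - y ^ (2 * k + 1)) := by
    refine tprod_congr fun k => ?_
    rw [← pow_mul]; ring
  have h2 : ∏' k : ℕ, (1 + (-y)⁻¹ * (y ^ 2) ^ (k + 1)) = ∏' k : ℕ, (1 - y ^ (2 * k + 1)) := by
    refine tprod_congr fun k => ?_
    rw [← pow_mul, inv_neg]
    field_simp
    ring
  rw [h1, h2]; ring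

lemma psi_eq {y : ℂ} (hy0 : y ≠ 0) (hy : ‖y‖ < 1) :
    (∑' n, jc 1 y n) * rchi (-y) = 2 * jE (y ^ 2) := by
  rw [jacobi one_ne_zero hy0 hy]
  have h1 : ∏' k : ℕ, (1 + 1 * y ^ k) = 2 * ∏' k : ℕ, (1 + y ^ (k + 1)) := by
    have m : Multipliable fun k : ℕ => 1 + y ^ (k + 1) := by
      simpa using mult_pow hy 1 1 1 one_ne_zero
    have := tprod_eq_zero_mul' (f := fun k : ℕ => 1 + y ^ k) m
    simp only [one_mul]
    rw [this]; norm_num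
  have h2 : ∏' k : ℕ, (1 + (1 : ℂ)⁻¹ * y ^ (k + 1)) = ∏' k : ℕ, (1 + y ^ (k + 1)) := by simp
  rw [h1, h2]
  have e1 := E_D hy
  have e2 := E_chi hy
  have e3 := jE_ne hy
  set D := ∏' k : ℕ, (1 + y ^ (k + 1))
  have e4 : D * rchi (-y) = 1 := by
    apply mul_left_cancel₀ e3
    rw [mul_one, ← mul_assoc, ← e1, ← e2]
  linear_combination 2 * jE y * D * e4 - 2 * e1

/-- `G(q²)G(q³) + q H(q²)H(q³) = χ(−q³)/χ(−q)`. -/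
theorem rr_forty_3_7 (q : ℂ) (hq : ‖q‖ < 1) :
    RRG (q ^ 2) * RRG (q ^ 3) + q * RRH (q ^ 2) * RRH (q ^ 3) =
      rchi (-q ^ 3) / rchi (-q) := by
  by_cases hq0 : q = 0
  · subst hq0
    simp [RRG, RRH, rchi]
  have h2 := sq_lt hq
  have h3 : ‖q ^ 3‖ < 1 := by
    rw [norm_pow]; exact pow_lt_one₀ (norm_nonneg _) hq (by norm_num)
  have hchi : rchi (-q) ≠ 0 := by
    rw [chi_eq]; exact tprod_sub_ne hq 2 1 (by norm_num) (by norm_num)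
  obtain ⟨a1, a2, a3, a4, a5⟩ := five_cases (pow_ne_zero 2 hq0) h2
  obtain ⟨b1, b2, b3, b4, b5⟩ := five_cases (pow_ne_zero 3 hq0) h3
  have hr := regroup hq0 hq
  have hphi := phi_eq (pow_ne_zero 3 hq0) h3
  rw [← pow_mul] at hphi
  have hpsi := psi_eq hq0 hq
  have k0 : jK 0 = 1 := rfl
  have k1 : jK 1 = 0 := rfl
  have k2 : jK 2 = 0 := rfl
  have k3 : jK 3 = 1 := rfl
  have k4 : jK 4 = 3 := rfl
  rw [Fin.sum_univ_five] at hr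
  simp only [Fin.val_zero, Fin.val_one, Fin.val_two, show ((3 : Fin 5).val) = 3 from rfl,
    show ((4 : Fin 5).val) = 4 from rfl, zero_add, Nat.reduceAdd, k0, k1, k2, k3, k4,
    a1, a2, a3, a4, a5, b1, b2, b3, b4, b5] at hr
  rw [show (3 * 2) = 6 from rfl] at hphi
  rw [hphi] at hr
  have n2 := jE_ne h2
  have n3 := jE_ne h3
  rw [eq_div_iff hchi]
  apply mul_left_cancel₀ (mul_ne_zero (mul_ne_zero two_ne_zero n2) n3)
  linear_combination (-rchi (-q)) * hr + jE (q ^ 3) * rchi (-q ^ 3) * hpsi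
end

section
/- Watson's identities: G(q)H(−q)+G(−q)H(q) = 2ψ(q²)/(q²;q²)_∞ and G(q)H(−q)−G(−q)H(q) = 2qψ(q^{10})/(q²;q²)_∞, where ψ(q)=∑_{n≥0} q^{n(n+1)/2}. -/
/-- Ramanujan's theta function `ψ(q) = ∑_{n≥0} q^(n(n+1)/2)`. -/
noncomputable def rpsi (q : ℂ) : ℂ := ∑' n : ℕ, q ^ (n * (n + 1) / 2)

open Filter Topology

/-- infinite q-Pochhammer symbol -/
noncomputable def poch (a p : ℂ) : ℂ := ∏' k : ℕ, (1 - a * p ^ k)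

lemma poch_summable (a : ℂ) {p : ℂ} (hp : ‖p‖ < 1) : Summable fun k : ℕ => ‖-(a * p ^ k)‖ := by
  simp only [norm_neg, norm_mul, norm_pow]
  exact (summable_geometric_of_lt_one (norm_nonneg _) hp).mul_left _

lemma poch_multipliable (a : ℂ) {p : ℂ} (hp : ‖p‖ < 1) :
    Multipliable fun k : ℕ => (1 - a * p ^ k) := by
  simpa [sub_eq_add_neg] using multipliable_one_add_of_summable (poch_summable a hp)

lemma poch_tendsto (a : ℂ) {p : ℂ} (hp : ‖p‖ < 1) :
    Tendsto (fun n => ∏ k ∈ Finset.range n, (1 - a * p ^ k)) atTop (𝓝 (poch a p)) :=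
  (poch_multipliable a hp).hasProd.tendsto_prod_nat

lemma one_sub_ne_zero {a p : ℂ} (ha : ‖a‖ < 1) (hp : ‖p‖ < 1) (k : ℕ) : 1 - a * p ^ k ≠ 0 := by
  intro h
  have h1 : a * p ^ k = 1 := (sub_eq_zero.mp h).symm
  have h2 : ‖a * p ^ k‖ < 1 := by
    rw [norm_mul, norm_pow]
    exact mul_lt_one_of_nonneg_of_lt_one_left (norm_nonneg _) ha (pow_le_one₀ (norm_nonneg _) hp.le)
  rw [h1] at h2
  simp at h2

lemma poch_ne_zero {a p : ℂ} (ha : ‖a‖ < 1) (hp : ‖p‖ < 1) : poch a p ≠ 0 := by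
  have := tprod_one_add_ne_zero_of_summable (f := fun k : ℕ => -(a * p ^ k))
    (fun k => by simpa [sub_eq_add_neg] using one_sub_ne_zero ha hp k) (poch_summable a hp)
  simpa [poch, sub_eq_add_neg] using this

lemma poch_split (a : ℂ) {p : ℂ} (hp : ‖p‖ < 1) {m : ℕ} (hm : m ≠ 0) :
    poch a p = ∏ r ∈ Finset.range m, poch (a * p ^ r) (p ^ m) := by
  have hpm : ‖p ^ m‖ < 1 := by
    rw [norm_pow]; exact pow_lt_one₀ (norm_nonneg _) hp hm
  have h1 := (poch_tendsto a hp).comp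
    (tendsto_atTop_mono (fun n => Nat.le_mul_of_pos_left n (Nat.pos_of_ne_zero hm)) tendsto_id)
  have h2 := tendsto_finsetProd (Finset.range m)
    (fun r _ => poch_tendsto (a * p ^ r) hpm)
  refine tendsto_nhds_unique h1 (h2.congr fun n => ?_)
  rw [Finset.prod_comm]
  simp only [Function.comp]
  induction n with
  | zero => simp
  | succ n ih =>
    rw [Finset.prod_range_succ, ih, Nat.mul_succ, Finset.prod_range_add]
    congr 1
    refine Finset.prod_congr rfl fun r _ => ?_
    ring

lemma poch_split2 (a : ℂ) {p : ℂ} (hp : ‖p‖ < 1) :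
    poch a p = poch a (p ^ 2) * poch (a * p) (p ^ 2) := by
  rw [poch_split a hp two_ne_zero]
  simp [Finset.prod_range_succ]

lemma poch_split5 (a : ℂ) {p : ℂ} (hp : ‖p‖ < 1) :
    poch a p = poch a (p ^ 5) * poch (a * p) (p ^ 5) * poch (a * p ^ 2) (p ^ 5)
      * poch (a * p ^ 3) (p ^ 5) * poch (a * p ^ 4) (p ^ 5) := by
  rw [poch_split a hp (m := 5) (by norm_num)]
  simp [Finset.prod_range_succ]

lemma poch_mul_neg (a : ℂ) {p : ℂ} (hp : ‖p‖ < 1) :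
    poch a p * poch (-a) p = poch (a ^ 2) (p ^ 2) := by
  rw [poch, poch, poch, ← (poch_multipliable a hp).tprod_mul (poch_multipliable (-a) hp)]
  refine tprod_congr fun k => ?_
  ring

/-- finite product -/
noncomputable def FF (p : ℂ) (n : ℕ) : ℂ := ∏ k ∈ Finset.range n, (1 - p * p ^ k)

/-- Gaussian binomial -/
noncomputable def gb (p : ℂ) : ℕ → ℕ → ℂ
  | _, 0 => 1
  | 0, _ + 1 => 0
  | N + 1, j + 1 => p ^ (j + 1) * gb p N (j + 1) + gb p N j

lemma gb_zero (p : ℂ) (N : ℕ) : gb p N 0 = 1 := by cases N <;> simp [gb]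

lemma gb_lt (p : ℂ) (N j : ℕ) (h : N < j) : gb p N j = 0 := by
  induction N generalizing j with
  | zero => cases j with
    | zero => omega
    | succ j => simp [gb]
  | succ N ih => cases j with
    | zero => omega
    | succ j => rw [gb, ih _ (by omega), ih _ (by omega)]; simp

lemma FF_succ (p : ℂ) (n : ℕ) : FF p (n + 1) = FF p n * (1 - p * p ^ n) := by
  simp [FF, Finset.prod_range_succ]

lemma gb_self (p : ℂ) (N : ℕ) : gb p N N = 1 := by
  induction N with
  | zero => simp [gb]
  | succ N ih => rw [gb, ih, gb_lt _ _ _ (by omega)]; simp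

lemma gb_closed (p : ℂ) (N a b : ℕ) (h : a + b = N) : gb p N a * (FF p a * FF p b) = FF p N := by
  induction N generalizing a b with
  | zero =>
    obtain rfl : a = 0 := by omega
    obtain rfl : b = 0 := by omega
    simp [gb, FF]
  | succ N ih =>
    cases a with
    | zero =>
      obtain rfl : b = N + 1 := by omega
      rw [gb_zero]; simp [FF]
    | succ a =>
      cases b with
      | zero =>
        obtain rfl : a = N := by omega
        rw [gb_self]; simp [FF]
      | succ b =>
        have h1 := ih (a + 1) b (by omega)
        have h2 := ih a (b + 1) (by omega)
        have hN : N = a + b + 1 := by omega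
        have e : p ^ N = p ^ a * p ^ b * p := by rw [hN]; ring
        rw [gb, FF_succ p N, FF_succ p a, FF_succ p b, e]
        rw [FF_succ] at h1 h2
        linear_combination p ^ (a + 1) * (1 - p * p ^ b) * h1 + (1 - p * p ^ a) * h2

lemma rothe (p x : ℂ) (N : ℕ) : ∏ k ∈ Finset.range N, (1 + x * p ^ k) =
    ∑ j ∈ Finset.range (N + 1), gb p N j * (p ^ (j.choose 2) * x ^ j) := by
  induction N generalizing x with
  | zero => simp [gb]
  | succ N ih =>
    rw [Finset.prod_range_succ']
    have e : ∀ k, 1 + x * p ^ (k + 1) = 1 + (x * p) * p ^ k := fun k => by ring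
    simp only [e]
    rw [ih, Finset.sum_range_succ' _ (N + 1)]
    simp only [gb, add_mul, Finset.sum_add_distrib]
    have hA : ∑ j ∈ Finset.range (N + 1), gb p N j * (p ^ (j.choose 2) * (x * p) ^ j) =
        ∑ j ∈ Finset.range (N + 1),
          p ^ (j + 1) * gb p N (j + 1) * (p ^ ((j + 1).choose 2) * x ^ (j + 1)) + 1 := by
      have := Finset.sum_range_succ (fun j => gb p N j * (p ^ (j.choose 2) * (x * p) ^ j)) (N + 1)
      rw [gb_lt p N (N + 1) (by omega), zero_mul, add_zero] at this
      rw [← this, Finset.sum_range_succ']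
      simp only [gb_zero]
      congr 1
      · refine Finset.sum_congr rfl fun j _ => ?_
        ring
      · simp
    have hB : ∑ j ∈ Finset.range (N + 1), gb p N j * (p ^ ((j + 1).choose 2) * x ^ (j + 1)) =
       x * ∑ j ∈ Finset.range (N + 1), gb p N j * (p ^ (j.choose 2) * (x * p) ^ j) := by
      rw [Finset.mul_sum]
      refine Finset.sum_congr rfl fun j _ => ?_
      have : (j + 1).choose 2 = j + j.choose 2 := by
        rw [Nat.choose_succ_succ' j 1]; simp
      rw [this]; ring
    rw [hB, mul_add, mul_one]
    rw [hA]
    simp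
    ring

/-- theta term -/
noncomputable def tt (p x : ℂ) (i : ℤ) : ℂ := p ^ (i * (i - 1) / 2) * x ^ i

lemma tri_succ (i : ℤ) : (i + 1) * (i + 1 - 1) / 2 = i * (i - 1) / 2 + i := by
  have : (i + 1) * (i + 1 - 1) = i * (i - 1) + i * 2 := by ring
  rw [this, Int.add_mul_ediv_right _ _ (by norm_num)]

lemma tt_succ {p x : ℂ} (hp : p ≠ 0) (hx : x ≠ 0) (i : ℤ) :
    tt p x (i + 1) = tt p x i * (p ^ i * x) := by
  rw [tt, tt, tri_succ, zpow_add₀ hp, zpow_add_one₀ hx]; ring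

lemma tt_ne_zero {p x : ℂ} (hp : p ≠ 0) (hx : x ≠ 0) (i : ℤ) : tt p x i ≠ 0 :=
  mul_ne_zero (zpow_ne_zero _ hp) (zpow_ne_zero _ hx)

lemma tt_neg_succ {p x : ℂ} (hp : p ≠ 0) (hx : x ≠ 0) (n : ℕ) :
    tt p x (-((n + 1 : ℕ) : ℤ)) = tt p x (-(n : ℤ)) * (p ^ (n + 1) / x) := by
  have := tt_succ hp hx (-((n + 1 : ℕ) : ℤ))
  rw [show -((n + 1 : ℕ) : ℤ) + 1 = -(n : ℤ) by push_cast; ring] at this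
  rw [this, zpow_neg, zpow_natCast]
  field_simp

lemma tt_summable {p x : ℂ} (hp : p ≠ 0) (hp1 : ‖p‖ < 1) (hx : x ≠ 0) :
    Summable fun i : ℤ => ‖tt p x i‖ := by
  have hlim : Tendsto (fun n : ℕ => ‖p‖ ^ n) atTop (𝓝 0) :=
    tendsto_pow_atTop_nhds_zero_of_lt_one (norm_nonneg _) hp1
  refine Summable.of_nat_of_neg ?_ ?_
  · refine (summable_of_ratio_test_tendsto_lt_one (l := 0) (f := fun n : ℕ => tt p x n)
      one_pos (Eventually.of_forall fun n => tt_ne_zero hp hx _) ?_).norm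
    have := hlim.mul_const ‖x‖
    rw [zero_mul] at this
    refine this.congr fun n => ?_
    have h0 : ‖tt p x n‖ ≠ 0 := norm_ne_zero_iff.mpr (tt_ne_zero hp hx _)
    push_cast
    rw [tt_succ hp hx, norm_mul, mul_div_cancel_left₀ _ h0]
    simp
  · refine (summable_of_ratio_test_tendsto_lt_one (l := 0) (f := fun n : ℕ => tt p x (-(n : ℤ)))
      one_pos (Eventually.of_forall fun n => tt_ne_zero hp hx _) ?_).norm
    have := hlim.mul_const (‖p‖ / ‖x‖)
    rw [zero_mul] at this
    refine this.congr fun n => ?_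
    have h0 : ‖tt p x (-(n : ℤ))‖ ≠ 0 := norm_ne_zero_iff.mpr (tt_ne_zero hp hx _)
    rw [tt_neg_succ hp hx, norm_mul, mul_div_cancel_left₀ _ h0]
    simp [pow_succ]
    ring

lemma tt_shift {p x : ℂ} (hp : p ≠ 0) (hx : x ≠ 0) (n j : ℕ) :
    tt p x (-(n : ℤ)) * (p ^ (j.choose 2) * (x * (p ^ n)⁻¹) ^ j) = tt p x (j - n) := by
  induction j with
  | zero => simp
  | succ j ih =>
    have : (j + 1).choose 2 = j + j.choose 2 := by
      rw [Nat.choose_succ_succ' j 1]; simp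
    rw [this, show ((j + 1 : ℕ) : ℤ) - n = (j - n) + 1 by push_cast; ring, tt_succ hp hx, ← ih,
      zpow_sub₀ hp, zpow_natCast, zpow_natCast]
    ring

lemma half_prod {p x : ℂ} (hp : p ≠ 0) (hx : x ≠ 0) (n : ℕ) :
    ∏ k ∈ Finset.range n, (1 + p / x * p ^ k) =
      tt p x (-(n : ℤ)) * ∏ k ∈ Finset.range n, (1 + x * (p ^ n)⁻¹ * p ^ k) := by
  rw [← Finset.prod_range_reflect (fun k => 1 + x * (p ^ n)⁻¹ * p ^ k)]
  have : ∀ k ∈ Finset.range n, 1 + x * (p ^ n)⁻¹ * p ^ (n - 1 - k) = 1 + x * (p ^ (k + 1))⁻¹ := by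
    intro k hk
    have hk := Finset.mem_range.mp hk
    have e : p ^ n = p ^ (n - 1 - k) * p ^ (k + 1) := by
      rw [← pow_add]; congr 1; omega
    rw [e]; field_simp
  rw [Finset.prod_congr rfl this]
  clear this
  induction n with
  | zero => simp [tt]
  | succ n ih =>
    rw [Finset.prod_range_succ, ih, Finset.prod_range_succ, tt_neg_succ hp hx]
    field_simp
    ring

/-- truncated term -/
noncomputable def hh (p x : ℂ) (n : ℕ) (i : ℤ) : ℂ :=
  if -(n : ℤ) ≤ i then gb p (2 * n) (n + i).toNat * tt p x i else 0

lemma finite_jtp {p x : ℂ} (hp : p ≠ 0) (hx : x ≠ 0) (n : ℕ) :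
    (∏ k ∈ Finset.range n, (1 - (-x) * p ^ k)) * ∏ k ∈ Finset.range n, (1 - (-(p / x)) * p ^ k)
      = ∑' i : ℤ, hh p x n i := by
  have hinj : Function.Injective (fun j : ℕ => (j : ℤ) - n) := by
    intro a b h
    simp only at h
    omega
  have hsupp : Function.support (hh p x n) ⊆ Set.range (fun j : ℕ => (j : ℤ) - n) := by
    intro i hi
    have : -(n : ℤ) ≤ i := by
      by_contra hc
      exact hi (by simp [hh, hc])
    exact ⟨(n + i).toNat, by simp only; omega⟩
  rw [← hinj.tsum_eq hsupp, tsum_eq_sum (s := Finset.range (2 * n + 1))]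
  · simp only [neg_mul, sub_neg_eq_add]
    rw [half_prod hp hx n]
    have h := rothe p (x * (p ^ n)⁻¹) (n + n)
    rw [Finset.prod_range_add] at h
    have e : ∀ k, 1 + x * (p ^ n)⁻¹ * p ^ (n + k) = 1 + x * p ^ k := by
      intro k; rw [pow_add]; field_simp
    simp only [e] at h
    rw [mul_comm, mul_assoc, h, Finset.mul_sum, two_mul]
    refine Finset.sum_congr rfl fun j _ => ?_
    have h1 : -(n : ℤ) ≤ (j : ℤ) - n := by omega
    have h2 : ((n : ℤ) + ((j : ℤ) - n)).toNat = j := by omega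
    rw [hh, if_pos h1, h2, ← tt_shift hp hx, two_mul]
    ring
  · intro j hj
    have : 2 * n < j := by simpa using hj
    have h2 : ((n : ℤ) + ((j : ℤ) - n)).toNat = j := by omega
    simp only [hh, h2, gb_lt _ _ _ this, zero_mul, ite_self]

lemma FF_tendsto {p : ℂ} (hp : ‖p‖ < 1) : Tendsto (FF p) atTop (𝓝 (poch p p)) :=
  poch_tendsto p hp

lemma FF_ne_zero {p : ℂ} (hp : ‖p‖ < 1) (n : ℕ) : FF p n ≠ 0 :=
  Finset.prod_ne_zero_iff.mpr fun k _ => one_sub_ne_zero hp hp k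

lemma gb_eq {p : ℂ} (hp : ‖p‖ < 1) (a b : ℕ) :
    gb p (a + b) a = FF p (a + b) * ((FF p a)⁻¹ * (FF p b)⁻¹) := by
  rw [← gb_closed p (a + b) a b rfl]
  have := FF_ne_zero hp a
  have := FF_ne_zero hp b
  field_simp

lemma gb_bound {p : ℂ} (hp : ‖p‖ < 1) : ∃ C : ℝ, ∀ N j, ‖gb p N j‖ ≤ C := by
  obtain ⟨A, hA⟩ := (FF_tendsto hp).norm.bddAbove_range
  obtain ⟨B, hB⟩ := ((FF_tendsto hp).inv₀ (poch_ne_zero hp hp)).norm.bddAbove_range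
  have hA' : ∀ n, ‖FF p n‖ ≤ A := fun n => hA ⟨n, rfl⟩
  have hB' : ∀ n, ‖(FF p n)⁻¹‖ ≤ B := fun n => hB ⟨n, rfl⟩
  have hA0 : 0 ≤ A := (norm_nonneg _).trans (hA' 0)
  have hB0 : 0 ≤ B := (norm_nonneg _).trans (hB' 0)
  refine ⟨A * (B * B), fun N j => ?_⟩
  by_cases h : N < j
  · rw [gb_lt _ _ _ h, norm_zero]; positivity
  · obtain ⟨b, rfl⟩ := Nat.exists_eq_add_of_le (not_lt.mp h)
    rw [gb_eq hp, norm_mul, norm_mul]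
    exact mul_le_mul (hA' _) (mul_le_mul (hB' _) (hB' _) (norm_nonneg _) hB0)
      (by positivity) hA0

/-- Jacobi triple product. -/
lemma jtp {p x : ℂ} (hp : p ≠ 0) (hp1 : ‖p‖ < 1) (hx : x ≠ 0) :
    poch (-x) p * poch (-(p / x)) p * poch p p = ∑' i : ℤ, tt p x i := by
  have hL := poch_ne_zero hp1 hp1
  have h1 := (poch_tendsto (-x) hp1).mul (poch_tendsto (-(p / x)) hp1)
  simp only [finite_jtp hp hx] at h1
  obtain ⟨C, hC⟩ := gb_bound hp1
  have hC0 : 0 ≤ C := (norm_nonneg _).trans (hC 0 0)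
  have h2 : Tendsto (fun n => ∑' i : ℤ, hh p x n i) atTop
      (𝓝 (∑' i : ℤ, (poch p p)⁻¹ * tt p x i)) := by
    refine tendsto_tsum_of_dominated_convergence (bound := fun i => C * ‖tt p x i‖)
      ((tt_summable hp hp1 hx).mul_left C) (fun i => ?_) (Eventually.of_forall fun n i => ?_)
    · have ha : Tendsto (fun n : ℕ => ((n : ℤ) + i).toNat) atTop atTop := by
        refine tendsto_atTop.mpr fun b => ?_
        filter_upwards [eventually_ge_atTop (b + i.natAbs)] with n hn
        omega
      have hb : Tendsto (fun n : ℕ => ((n : ℤ) - i).toNat) atTop atTop := by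
        refine tendsto_atTop.mpr fun b => ?_
        filter_upwards [eventually_ge_atTop (b + i.natAbs)] with n hn
        omega
      have hc : Tendsto (fun n : ℕ => ((n : ℤ) + i).toNat + ((n : ℤ) - i).toNat) atTop atTop :=
        ha.atTop_add_atTop hb
      have hF := FF_tendsto hp1
      have hI := hF.inv₀ hL
      have := ((hF.comp hc).mul ((hI.comp ha).mul (hI.comp hb))).mul_const (tt p x i)
      rw [show poch p p * ((poch p p)⁻¹ * (poch p p)⁻¹) = (poch p p)⁻¹ by field_simp] at this
      refine this.congr' ?_
      filter_upwards [eventually_ge_atTop i.natAbs] with n hn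
      have e : ((n : ℤ) + i).toNat + ((n : ℤ) - i).toNat = 2 * n := by omega
      have hge : -(n : ℤ) ≤ i := by omega
      rw [hh, if_pos hge, ← e, gb_eq hp1]
      rfl
    · rw [hh]
      split_ifs
      · rw [norm_mul]
        exact mul_le_mul_of_nonneg_right (hC _ _) (norm_nonneg _)
      · rw [norm_zero]; positivity
  have h3 := tendsto_nhds_unique h1 h2
  rw [h3, tsum_mul_left]
  field_simp

lemma even_tri (i : ℤ) : (i * (i - 1) / 2) * 2 = i * (i - 1) :=
  Int.ediv_mul_cancel (Int.even_mul_pred_self i).two_dvd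

lemma tt_even {p x y : ℂ} (hp : p ≠ 0) (hx : x ≠ 0) (hy : y ≠ 0) (m n : ℤ) :
    tt p x (m + n) * tt p y (m - n) = tt (p ^ 2) (x * y) m * tt (p ^ 2) (p * x / y) n := by
  have e : (m + n) * (m + n - 1) / 2 + (m - n) * (m - n - 1) / 2 =
      2 * (m * (m - 1) / 2) + 2 * (n * (n - 1) / 2) + n := by
    have h1 := even_tri (m + n)
    have h2 := even_tri (m - n)
    have h3 := even_tri m
    have h4 := even_tri n
    have h5 : (m + n) * (m + n - 1) + (m - n) * (m - n - 1) =
      2 * (m * (m - 1)) + 2 * (n * (n - 1)) + 2 * n := by ring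
    omega
  have e2 : p ^ ((m + n) * (m + n - 1) / 2) * p ^ ((m - n) * (m - n - 1) / 2) =
      (p ^ 2) ^ (m * (m - 1) / 2) * (p ^ 2) ^ (n * (n - 1) / 2) * p ^ n := by
    rw [← zpow_add₀ hp, e, zpow_add₀ hp, zpow_add₀ hp, zpow_mul, zpow_mul]
    norm_cast
  simp only [tt]
  rw [div_zpow, mul_zpow, mul_zpow, zpow_add₀ hx, zpow_sub₀ hy]
  linear_combination (x ^ m * x ^ n * (y ^ m / y ^ n)) * e2

lemma tt_odd {p x y : ℂ} (hp : p ≠ 0) (hx : x ≠ 0) (hy : y ≠ 0) (m n : ℤ) :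
    tt p x (m + n + 1) * tt p y (m - n) =
      x * (tt (p ^ 2) (p * x * y) m * tt (p ^ 2) (p ^ 2 * x / y) n) := by
  rw [tt_succ hp hx]
  have h := tt_even hp hx hy m n
  have h1 : tt (p ^ 2) (p * x * y) m = tt (p ^ 2) (x * y) m * p ^ m := by
    simp only [tt, mul_zpow]; ring
  have h2 : tt (p ^ 2) (p ^ 2 * x / y) n = tt (p ^ 2) (p * x / y) n * p ^ n := by
    rw [show p ^ 2 * x / y = p * x / y * p by ring]
    simp only [tt, mul_zpow]; ring
  rw [h1, h2, zpow_add₀ hp]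
  linear_combination (p ^ m * p ^ n * x) * h

lemma theta_mul {p x y : ℂ} (hp : p ≠ 0) (hp1 : ‖p‖ < 1) (hx : x ≠ 0) (hy : y ≠ 0) :
    (∑' i : ℤ, tt p x i) * (∑' i : ℤ, tt p y i) =
      (∑' i : ℤ, tt (p ^ 2) (x * y) i) * (∑' i : ℤ, tt (p ^ 2) (p * x / y) i) +
      x * ((∑' i : ℤ, tt (p ^ 2) (p * x * y) i) * (∑' i : ℤ, tt (p ^ 2) (p ^ 2 * x / y) i)) := by
  have hp2 : ‖p ^ 2‖ < 1 := by
    rw [norm_pow]; exact pow_lt_one₀ (norm_nonneg _) hp1 two_ne_zero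
  have hp0 : p ^ 2 ≠ 0 := pow_ne_zero _ hp
  have s1 := tt_summable hp hp1 hx
  have s2 := tt_summable hp hp1 hy
  have s3 := tt_summable hp0 hp2 (mul_ne_zero hx hy)
  have s4 := tt_summable hp0 hp2 (div_ne_zero (mul_ne_zero hp hx) hy)
  have s5 := tt_summable hp0 hp2 (mul_ne_zero (mul_ne_zero hp hx) hy)
  have s6 := tt_summable hp0 hp2 (div_ne_zero (mul_ne_zero hp0 hx) hy)
  rw [tsum_mul_tsum_of_summable_norm s1 s2, tsum_mul_tsum_of_summable_norm s3 s4,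
    tsum_mul_tsum_of_summable_norm s5 s6, ← tsum_mul_left]
  have S34 := summable_mul_of_summable_norm s3 s4
  have S56 := (summable_mul_of_summable_norm s5 s6).mul_left x
  let φ : (ℤ × ℤ) ⊕ (ℤ × ℤ) → ℤ × ℤ := Sum.elim (fun z => (z.1 + z.2, z.1 - z.2))
    (fun z => (z.1 + z.2 + 1, z.1 - z.2))
  have hφ : Function.Bijective φ := by
    constructor
    · rintro (⟨a, b⟩ | ⟨a, b⟩) (⟨c, d⟩ | ⟨c, d⟩) h <;>
        simp only [φ, Sum.elim_inl, Sum.elim_inr, Prod.mk.injEq] at h <;>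
        first
        | (exfalso; omega)
        | (congr 2 <;> omega)
    · rintro ⟨i, j⟩
      rcases Int.even_or_odd' (i + j) with ⟨m, hm | hm⟩
      · exact ⟨Sum.inl (m, i - m), by simp only [φ, Sum.elim_inl, Prod.mk.injEq]; omega⟩
      · exact ⟨Sum.inr (m, i - 1 - m), by simp only [φ, Sum.elim_inr, Prod.mk.injEq]; omega⟩
  rw [← (Equiv.ofBijective φ hφ).tsum_eq]
  refine HasSum.tsum_eq (HasSum.sum ?_ ?_)
  · have h := S34.hasSum
    simp only [← tt_even hp hx hy] at h ⊢
    exact h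
  · have h := S56.hasSum
    simp only [← tt_odd hp hx hy] at h ⊢
    exact h

lemma rpsi_theta {p : ℂ} (hp : p ≠ 0) (hp1 : ‖p‖ < 1) :
    ∑' i : ℤ, tt p 1 i = 2 * rpsi p := by
  have key : ∀ n : ℕ, tt p 1 (-(n : ℤ)) = p ^ (n * (n + 1) / 2) := by
    intro n
    rw [tt, one_zpow, mul_one, ← zpow_natCast]
    congr 1
    push_cast
    congr 1
    ring
  have key2 : ∀ n : ℕ, tt p 1 (-(-((n : ℤ) + 1))) = p ^ (n * (n + 1) / 2) := by
    intro n
    rw [tt, one_zpow, mul_one, ← zpow_natCast]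
    congr 1
    push_cast
    congr 1
    ring
  have hs := (tt_summable hp hp1 one_ne_zero).of_norm
  have hs1 : Summable fun n : ℕ => p ^ (n * (n + 1) / 2) := by
    refine (hs.comp_injective (i := fun n : ℕ => -(n : ℤ)) ?_).congr fun n => key n
    intro a b h
    simp only at h
    omega
  rw [← (Equiv.neg ℤ).tsum_eq, two_mul, rpsi]
  refine (HasSum.of_nat_of_neg_add_one ?_ ?_).tsum_eq
  · convert hs1.hasSum using 1
    funext n
    exact key n
  · convert hs1.hasSum using 1
    funext n
    exact key2 n

lemma norm_pow_lt {q : ℂ} (hq : ‖q‖ < 1) {n : ℕ} (hn : n ≠ 0) : ‖q ^ n‖ < 1 := by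
  rw [norm_pow]; exact pow_lt_one₀ (norm_nonneg _) hq hn

lemma rpsi_prod {p : ℂ} (hp : p ≠ 0) (hp1 : ‖p‖ < 1) :
    rpsi p * poch p (p ^ 2) = poch (p ^ 2) (p ^ 2) := by
  have h := jtp hp hp1 one_ne_zero
  rw [rpsi_theta hp hp1, div_one] at h
  have h1 : poch (-1) p = 2 * poch (-p) p := by
    rw [poch, tprod_eq_zero_mul', poch]
    · congr 1
      · norm_num
      · refine tprod_congr fun k => ?_
        ring
    · convert poch_multipliable (-p) hp1 using 2
      ring
  have h2 := poch_mul_neg p hp1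
  have h3 := poch_split2 p hp1
  rw [← pow_two] at h3
  have hA := poch_ne_zero (norm_pow_lt hp1 two_ne_zero) (norm_pow_lt hp1 two_ne_zero)
  have h4 : poch p (p ^ 2) * poch (-p) p = 1 := by
    rw [h3] at h2
    apply mul_left_cancel₀ hA
    linear_combination h2
  rw [h1] at h
  have h5 : rpsi p = poch (-p) p * poch (-p) p * poch p p := by
    linear_combination -h / 2
  rw [h5, h3]
  linear_combination poch (p ^ 2) (p ^ 2) * (poch p (p ^ 2) * poch (-p) p + 1) * h4

lemma key_identity {q : ℂ} (hq0 : q ≠ 0) (hq : ‖q‖ < 1) :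
    poch (q ^ 10) (q ^ 10) =
      poch q (q ^ 10) * poch (q ^ 9) (q ^ 10) * poch (-q ^ 3) (q ^ 10) * poch (-q ^ 7) (q ^ 10)
        * (rpsi (q ^ 2) + q * rpsi (q ^ 10)) := by
  have n0 : ∀ n : ℕ, q ^ n ≠ 0 := fun n => pow_ne_zero n hq0
  have l1 : ∀ n : ℕ, n ≠ 0 → ‖q ^ n‖ < 1 := fun n hn => norm_pow_lt hq hn
  have nz : ∀ n m : ℕ, n ≠ 0 → m ≠ 0 → poch (q ^ n) (q ^ m) ≠ 0 :=
    fun n m hn hm => poch_ne_zero (l1 n hn) (l1 m hm)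
  have T := theta_mul (n0 10) (l1 10 (by norm_num)) hq0 (neg_ne_zero.mpr (n0 3))
  have J : ∀ m a b : ℕ, m ≠ 0 → a + b = m →
      ∑' i : ℤ, tt (q ^ m) (-q ^ a) i = poch (q ^ a) (q ^ m) * poch (q ^ b) (q ^ m)
        * poch (q ^ m) (q ^ m) := by
    intro m a b hm hab
    rw [← jtp (n0 m) (l1 m hm) (neg_ne_zero.mpr (n0 a)), neg_neg]
    congr 3
    rw [← hab, pow_add]
    have := n0 a
    field_simp
  have J1 : ∑' i : ℤ, tt (q ^ 10) q i = poch (-q) (q ^ 10) * poch (-q ^ 9) (q ^ 10)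
        * poch (q ^ 10) (q ^ 10) := by
    rw [← jtp (n0 10) (l1 10 (by norm_num)) hq0]
    congr 3
    field_simp
  rw [J1, J 10 3 7 (by norm_num) rfl,
    show (q ^ 10) ^ 2 = q ^ 20 by ring,
    show q * -q ^ 3 = -q ^ 4 by ring,
    show q ^ 10 * q / -q ^ 3 = -q ^ 8 by field_simp,
    show q ^ 10 * q * -q ^ 3 = -q ^ 14 by ring,
    show q ^ 20 * q / -q ^ 3 = -q ^ 18 by field_simp,
    J 20 4 16 (by norm_num) rfl, J 20 8 12 (by norm_num) rfl, J 20 14 6 (by norm_num) rfl,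
    J 20 18 2 (by norm_num) rfl] at T
  have P1 := rpsi_prod (n0 2) (l1 2 (by norm_num))
  have P2 := rpsi_prod (n0 10) (l1 10 (by norm_num))
  have S1 := poch_split5 (q ^ 2) (l1 4 (by norm_num))
  have S2 := poch_split5 (q ^ 4) (l1 4 (by norm_num))
  have S3 := poch_split2 (q ^ 10) (l1 10 (by norm_num))
  have M1 := poch_mul_neg q (l1 10 (by norm_num))
  have M9 := poch_mul_neg (q ^ 9) (l1 10 (by norm_num))
  have M3 := poch_mul_neg (q ^ 3) (l1 10 (by norm_num))
  have M7 := poch_mul_neg (q ^ 7) (l1 10 (by norm_num))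
  simp only [← pow_mul, ← pow_add] at P1 P2 S1 S2 S3 M1 M9 M3 M7
  norm_num at P1 P2 S1 S2 S3 M1 M9 M3 M7
  rw [S1, S2] at P1
  have h2 := nz 2 20 (by norm_num) (by norm_num)
  have h6 := nz 6 20 (by norm_num) (by norm_num)
  have h10 := nz 10 20 (by norm_num) (by norm_num)
  have h14 := nz 14 20 (by norm_num) (by norm_num)
  have h18 := nz 18 20 (by norm_num) (by norm_num)
  have h20 := nz 20 20 (by norm_num) (by norm_num)
  rw [S3] at T ⊢
  generalize poch (q ^ 2) (q ^ 20) = p2 at *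
  generalize poch (q ^ 4) (q ^ 20) = p4 at *
  generalize poch (q ^ 6) (q ^ 20) = p6 at *
  generalize poch (q ^ 8) (q ^ 20) = p8 at *
  generalize poch (q ^ 10) (q ^ 20) = p10 at *
  generalize poch (q ^ 12) (q ^ 20) = p12 at *
  generalize poch (q ^ 14) (q ^ 20) = p14 at *
  generalize poch (q ^ 16) (q ^ 20) = p16 at *
  generalize poch (q ^ 18) (q ^ 20) = p18 at *
  generalize poch (q ^ 20) (q ^ 20) = p20 at *
  generalize poch q (q ^ 10) = a1 at *
  generalize poch (-q) (q ^ 10) = b1 at *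
  generalize poch (q ^ 3) (q ^ 10) = a3 at *
  generalize poch (-q ^ 3) (q ^ 10) = b3 at *
  generalize poch (q ^ 7) (q ^ 10) = a7 at *
  generalize poch (-q ^ 7) (q ^ 10) = b7 at *
  generalize poch (q ^ 9) (q ^ 10) = a9 at *
  generalize poch (-q ^ 9) (q ^ 10) = b9 at *
  have hD : (a1 * a9 * b3 * b7) * (b1 * b9 * a3 * a7) = p2 * p6 * p14 * p18 := by
    rw [← M1, ← M9, ← M3, ← M7]; ring
  have hT : (b1 * b9 * a3 * a7) * p10 ^ 2 = p4 * p8 * p12 * p16 + q * (p2 * p6 * p14 * p18) := by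
    apply mul_right_cancel₀ (pow_ne_zero 2 h20)
    linear_combination T
  have hP : (rpsi (q ^ 2) + q * rpsi (q ^ 10)) * (p10 * (p2 * p6 * p14 * p18))
      = p20 * (p4 * p8 * p12 * p16 + q * (p2 * p6 * p14 * p18)) := by
    linear_combination P1 + q * (p2 * p6 * p14 * p18) * P2
  have hDne : p10 * (p2 * p6 * p14 * p18) ≠ 0 := by positivity
  apply mul_right_cancel₀ hDne
  linear_combination (-p20 * p10 ^ 2) * hD - (a1 * a9 * b3 * b7) * hP
    + (a1 * a9 * b3 * b7 * p20) * hT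

lemma GH_formula {q : ℂ} (hq0 : q ≠ 0) (hq : ‖q‖ < 1) :
    RRG q * RRH (-q) = (rpsi (q ^ 2) + q * rpsi (q ^ 10)) / ∏' n : ℕ, (1 - q ^ (2 * n + 2)) := by
  have l1 : ∀ n : ℕ, n ≠ 0 → ‖q ^ n‖ < 1 := fun n hn => norm_pow_lt hq hn
  have l2 : ∀ n : ℕ, n ≠ 0 → ‖-q ^ n‖ < 1 := fun n hn => by rw [norm_neg]; exact l1 n hn
  have nz : ∀ n m : ℕ, n ≠ 0 → m ≠ 0 → poch (q ^ n) (q ^ m) ≠ 0 :=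
    fun n m hn hm => poch_ne_zero (l1 n hn) (l1 m hm)
  have nz' : ∀ n m : ℕ, n ≠ 0 → m ≠ 0 → poch (-q ^ n) (q ^ m) ≠ 0 :=
    fun n m hn hm => poch_ne_zero (l2 n hn) (l1 m hm)
  have K := key_identity hq0 hq
  have e1 : ∏' k : ℕ, (1 - q ^ (5 * k + 1)) = poch q (q ^ 5) :=
    tprod_congr fun k => by ring
  have e4 : ∏' k : ℕ, (1 - q ^ (5 * k + 4)) = poch (q ^ 4) (q ^ 5) :=
    tprod_congr fun k => by ring
  have e2 : ∏' k : ℕ, (1 - (-q) ^ (5 * k + 2)) = poch (q ^ 2) (-q ^ 5) :=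
    tprod_congr fun k => by
      rw [pow_add, pow_mul, show (-q) ^ 5 = -q ^ 5 by ring]; ring
  have e3 : ∏' k : ℕ, (1 - (-q) ^ (5 * k + 3)) = poch (-q ^ 3) (-q ^ 5) :=
    tprod_congr fun k => by
      rw [pow_add, pow_mul, show (-q) ^ 5 = -q ^ 5 by ring]; ring
  have e5 : ∏' n : ℕ, (1 - q ^ (2 * n + 2)) = poch (q ^ 2) (q ^ 2) :=
    tprod_congr fun k => by ring
  have S1 := poch_split2 q (l1 5 (by norm_num))
  have S4 := poch_split2 (q ^ 4) (l1 5 (by norm_num))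
  have S2 := poch_split2 (q ^ 2) (l2 5 (by norm_num))
  have S3 := poch_split2 (-q ^ 3) (l2 5 (by norm_num))
  have S5 := poch_split5 (q ^ 2) (l1 2 (by norm_num))
  rw [show (-q ^ 5) ^ 2 = q ^ 10 by ring, show q ^ 2 * -q ^ 5 = -q ^ 7 by ring] at S2
  rw [show (-q ^ 5) ^ 2 = q ^ 10 by ring, show -q ^ 3 * -q ^ 5 = q ^ 8 by ring] at S3
  rw [show q * q ^ 5 = q ^ 6 by ring] at S1
  simp only [← pow_mul, ← pow_add] at S1 S4 S5
  norm_num at S1 S4 S5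
  rw [RRG, RRH, e1, e2, e3, e4, e5, S1, S2, S3, S4, S5]
  have h1 := nz 1 10 (by norm_num) (by norm_num)
  rw [pow_one] at h1
  have h2 := nz 2 10 (by norm_num) (by norm_num)
  have h4 := nz 4 10 (by norm_num) (by norm_num)
  have h6 := nz 6 10 (by norm_num) (by norm_num)
  have h8 := nz 8 10 (by norm_num) (by norm_num)
  have h9 := nz 9 10 (by norm_num) (by norm_num)
  have h10 := nz 10 10 (by norm_num) (by norm_num)
  have h3 := nz' 3 10 (by norm_num) (by norm_num)
  have h7 := nz' 7 10 (by norm_num) (by norm_num)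
  rw [div_mul_div_comm, div_eq_div_iff (by positivity) (by positivity)]
  rw [K]
  ring

/-- Watson's identities:
`G(q)H(−q) + G(−q)H(q) = 2ψ(q²)/(q²;q²)_∞` and
`G(q)H(−q) − G(−q)H(q) = 2qψ(q¹⁰)/(q²;q²)_∞`. -/
theorem watson_GH (q : ℂ) (hq : ‖q‖ < 1) :
    RRG q * RRH (-q) + RRG (-q) * RRH q =
        2 * rpsi (q ^ 2) / ∏' n : ℕ, (1 - q ^ (2 * n + 2)) ∧
      RRG q * RRH (-q) - RRG (-q) * RRH q =
        2 * q * rpsi (q ^ 10) / ∏' n : ℕ, (1 - q ^ (2 * n + 2)) := by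
  by_cases h0 : q = 0
  · subst h0
    have h1 : rpsi 0 = 1 := by
      rw [rpsi, tsum_eq_single 0]
      · simp
      · intro n hn
        refine zero_pow ?_
        have : 1 ≤ n := Nat.pos_of_ne_zero hn
        have : 2 ≤ n * (n + 1) := by nlinarith
        omega
    simp [RRG, RRH, h1]
    norm_num
  · have A := GH_formula h0 hq
    have B := GH_formula (neg_ne_zero.mpr h0) (by rwa [norm_neg])
    have e : ∀ n : ℕ, (-q) ^ (2 * n + 2) = q ^ (2 * n + 2) := fun n =>
      Even.neg_pow ⟨n + 1, by ring⟩ q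
    simp only [e] at B
    rw [neg_neg, show (-q) ^ 2 = q ^ 2 by ring, show (-q) ^ 10 = q ^ 10 by ring] at B
    rw [mul_comm (RRG (-q)), mul_comm (RRH q), A, B]
    constructor <;> ring
end

section
/- ∑_{n∈ℤ} ν⁶ⁿ qⁿ² = φ₂²φ₃/(φ₁φ₆), where ν = e^{πi/3} is a primitive sixth root of unity and φ_k = ∏_{n≥1}(1−q^{kn}). -/
/-- The infinite product `φ_k = (q^k;q^k)_∞ = ∏_{n≥1}(1 − q^(kn))`. -/
noncomputable def phiP (q : ℂ) (k : ℕ) : ℂ := ∏' n : ℕ, (1 - q ^ (k * (n + 1)))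

open Filter Topology Finset

/-- Partial products. -/
noncomputable def partP (q : ℂ) (k N : ℕ) : ℂ := ∏ n ∈ range N, (1 - q ^ (k * (n + 1)))

/-- Inverse of the `q²`-Pochhammer symbol, extended by zero. -/
noncomputable def rinv (q : ℂ) (k : ℤ) : ℂ := if 0 ≤ k then (partP q 2 k.toNat)⁻¹ else 0

lemma pow_ne_one_aux {q : ℂ} (hq : ‖q‖ < 1) {m : ℕ} (hm : m ≠ 0) : 1 - q ^ m ≠ 0 := by
  intro h
  have h1 : q ^ m = 1 := (sub_eq_zero.mp h).symm
  have h2 : ‖q‖ ^ m < 1 := pow_lt_one₀ (norm_nonneg _) hq hm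
  rw [← norm_pow, h1] at h2
  simp at h2

lemma summ_aux {q : ℂ} (hq : ‖q‖ < 1) {k : ℕ} (hk : k ≠ 0) :
    Summable (fun n : ℕ => ‖-q ^ (k * (n + 1))‖) := by
  have h2 : ‖q‖ ^ k < 1 := pow_lt_one₀ (norm_nonneg _) hq hk
  have := (summable_nat_add_iff 1).mpr (summable_geometric_of_lt_one (by positivity) h2)
  simpa [norm_neg, norm_pow, pow_mul] using this

lemma partP_tendsto {q : ℂ} (hq : ‖q‖ < 1) {k : ℕ} (hk : k ≠ 0) :
    Tendsto (partP q k) atTop (𝓝 (phiP q k)) := by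
  have h := multipliable_one_add_of_summable (summ_aux hq hk)
  have := h.tendsto_prod_tprod_nat
  simp only [← sub_eq_add_neg] at this
  exact this

lemma phiP_ne_zero {q : ℂ} (hq : ‖q‖ < 1) {k : ℕ} (hk : k ≠ 0) : phiP q k ≠ 0 := by
  have := tprod_one_add_ne_zero_of_summable (f := fun n : ℕ => -q ^ (k * (n + 1)))
    (fun n => by
      rw [← sub_eq_add_neg]
      exact pow_ne_one_aux hq (by positivity)) (summ_aux hq hk)
  simpa only [phiP, sub_eq_add_neg] using this

lemma partP_ne_zero {q : ℂ} (hq : ‖q‖ < 1) {k : ℕ} (hk : k ≠ 0) (N : ℕ) : partP q k N ≠ 0 :=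
  prod_ne_zero_iff.mpr fun _ _ => pow_ne_one_aux hq (by positivity)

lemma rinv_rec {q : ℂ} (hq : ‖q‖ < 1) (k : ℤ) :
    rinv q (k - 1) = (1 - (q ^ 2) ^ k) * rinv q k := by
  rcases lt_trichotomy k 0 with h | h | h
  · simp [rinv, not_le.mpr h, show ¬ (1 ≤ k) by omega]
  · subst h; simp [rinv]
  · obtain ⟨m, rfl⟩ : ∃ m : ℕ, k = m + 1 := ⟨(k - 1).toNat, by omega⟩
    have e1 : ((m : ℤ) + 1 - 1) = m := by ring
    have e2 : ((m : ℤ) + 1).toNat = m + 1 := by omega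
    have e3 : (q ^ 2) ^ ((m : ℤ) + 1) = q ^ (2 * (m + 1)) := by
      rw [pow_mul, ← zpow_natCast (q ^ 2) (m + 1)]; push_cast; rfl
    rw [rinv, rinv, e1, e2, e3, if_pos (by omega), if_pos (by omega), Int.toNat_natCast]
    have h1 := pow_ne_one_aux hq (m := 2 * (m + 1)) (by positivity)
    have h2 := partP_ne_zero hq (k := 2) (by norm_num) m
    have h3 : partP q 2 (m + 1) = partP q 2 m * (1 - q ^ (2 * (m + 1))) := by
      simp [partP, prod_range_succ]
    rw [h3]
    field_simp

lemma rinv_tendsto {q : ℂ} (hq : ‖q‖ < 1) :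
    Tendsto (rinv q) atTop (𝓝 (phiP q 2)⁻¹) := by
  have h := ((partP_tendsto hq (k := 2) (by norm_num)).inv₀ (phiP_ne_zero hq (by norm_num)))
  have ht : Tendsto Int.toNat atTop atTop :=
    tendsto_atTop.mpr fun b => by
      filter_upwards [eventually_ge_atTop (b : ℤ)] with a ha
      omega
  refine (h.comp ht).congr' ?_
  filter_upwards [eventually_ge_atTop (0 : ℤ)] with a ha
  simp [rinv, ha]

lemma rinv_bdd {q : ℂ} (hq : ‖q‖ < 1) : ∃ C, 0 ≤ C ∧ ∀ k, ‖rinv q k‖ ≤ C := by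
  have h := ((partP_tendsto hq (k := 2) (by norm_num)).inv₀ (phiP_ne_zero hq (by norm_num)))
  obtain ⟨C, hC⟩ := h.norm.bddAbove_range
  have hC0 : ∀ n, ‖(partP q 2 n)⁻¹‖ ≤ C := fun n => hC ⟨n, rfl⟩
  have hC1 : 0 ≤ C := (norm_nonneg _).trans (hC0 0)
  refine ⟨C, hC1, fun k => ?_⟩
  unfold rinv
  split_ifs
  · exact hC0 _
  · simpa using hC1

/-- Finite Jacobi triple product. -/
lemma finite_jtp_s13 {q z : ℂ} (hq : ‖q‖ < 1) (hq0 : q ≠ 0) (hz : z ≠ 0) (N : ℕ) :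
    HasSum (fun n : ℤ => partP q 2 (2 * N) * rinv q (N - n) * rinv q (N + n) * (z ^ n * q ^ (n ^ 2)))
      (∏ j ∈ range N, ((1 + z * q ^ (2 * j + 1)) * (1 + z⁻¹ * q ^ (2 * j + 1)))) := by
  induction N with
  | zero =>
    have : (fun n : ℤ => partP q 2 (2 * 0) * rinv q ((0 : ℕ) - n) * rinv q ((0 : ℕ) + n)
        * (z ^ n * q ^ (n ^ 2))) = fun n => if n = 0 then 1 else 0 := by
      funext n
      rcases lt_trichotomy n 0 with h | h | h
      · simp [rinv, h.ne, not_le.mpr h]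
      · subst h; simp [rinv, partP]
      · simp [rinv, h.ne', not_le.mpr h]
    rw [this]
    simpa using hasSum_ite_eq (0 : ℤ) (1 : ℂ)
  | succ N ih =>
    rw [prod_range_succ]
    have s1 := (Equiv.subRight (1 : ℤ)).hasSum_iff.mpr ih
    have s2 := (Equiv.addRight (1 : ℤ)).hasSum_iff.mpr ih
    have t := ((ih.mul_left (1 + q ^ (4 * N + 2))).add (s1.mul_left (z * q ^ (2 * N + 1)))).add
      (s2.mul_left (z⁻¹ * q ^ (2 * N + 1)))
    convert t using 1
    · rfl
    · funext n
      simp only [Function.comp, Equiv.subRight_apply, Equiv.coe_addRight]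
      have hp : partP q 2 (2 * (N + 1)) = partP q 2 (2 * N) * (1 - q ^ (2 * (2 * N + 1)))
          * (1 - q ^ (2 * (2 * N + 1 + 1))) := by
        rw [show 2 * (N + 1) = 2 * N + 1 + 1 by ring]
        simp [partP, prod_range_succ]
      obtain ⟨a, ha⟩ : ∃ a : ℤ, a = N + 1 - n := ⟨_, rfl⟩
      obtain ⟨b, hb⟩ : ∃ b : ℤ, b = N + 1 + n := ⟨_, rfl⟩
      have ea1 := rinv_rec hq a
      have ea2 := rinv_rec hq (a - 1)
      have eb1 := rinv_rec hq b
      have eb2 := rinv_rec hq (b - 1)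
      have hQ : q ^ 2 ≠ 0 := pow_ne_zero _ hq0
      rw [zpow_sub_one₀ hQ, ea1] at ea2
      rw [zpow_sub_one₀ hQ, eb1] at eb2
      have i1 : (((N + 1 : ℕ) : ℤ) - n) = a := by push_cast; omega
      have i2 : (((N + 1 : ℕ) : ℤ) + n) = b := by push_cast; omega
      have i3 : ((N : ℤ) - n) = a - 1 := by omega
      have i4 : ((N : ℤ) + n) = b - 1 := by omega
      have i5 : ((N : ℤ) - (n - 1)) = a := by omega
      have i6 : ((N : ℤ) + (n - 1)) = b - 1 - 1 := by omega
      have i7 : ((N : ℤ) - (n + 1)) = a - 1 - 1 := by omega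
      have i8 : ((N : ℤ) + (n + 1)) = b := by omega
      rw [hp, i1, i2, i3, i4, i5, i6, i7, i8, ea2, eb2, ea1, eb1]
      have hAB : (q ^ 2) ^ a * (q ^ 2) ^ b = q ^ (2 * (2 * N + 1 + 1)) := by
        rw [← zpow_add₀ hQ, show a + b = ((2 * N + 1 + 1 : ℕ) : ℤ) by push_cast; omega,
          zpow_natCast, pow_mul]
      have hAB' : (q ^ 2) ^ a * (q ^ 2) ^ b * (q ^ 2)⁻¹ = q ^ (2 * (2 * N + 1)) := by
        rw [hAB]; field_simp; ring
      have m1 : z * q ^ (2 * N + 1) * (z ^ (n - 1) * q ^ ((n - 1) ^ 2))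
          = (q ^ 2) ^ a * (z ^ n * q ^ (n ^ 2)) := by
        have e : q ^ (2 * N + 1) * q ^ ((n - 1) ^ 2) = (q ^ 2) ^ a * q ^ (n ^ 2) := by
          rw [← zpow_natCast q (2 * N + 1), ← zpow_natCast q 2, ← zpow_mul, ← zpow_add₀ hq0,
            ← zpow_add₀ hq0]
          congr 1
          push_cast
          rw [ha]; ring
        rw [zpow_sub_one₀ hz]
        field_simp
        linear_combination e
      have m2 : z⁻¹ * q ^ (2 * N + 1) * (z ^ (n + 1) * q ^ ((n + 1) ^ 2))
          = (q ^ 2) ^ b * (z ^ n * q ^ (n ^ 2)) := by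
        have e : q ^ (2 * N + 1) * q ^ ((n + 1) ^ 2) = (q ^ 2) ^ b * q ^ (n ^ 2) := by
          rw [← zpow_natCast q (2 * N + 1), ← zpow_natCast q 2, ← zpow_mul, ← zpow_add₀ hq0,
            ← zpow_add₀ hq0]
          congr 1
          push_cast
          rw [hb]; ring
        rw [zpow_add_one₀ hz]
        field_simp
        linear_combination e
      rw [show 4 * N + 2 = 2 * (2 * N + 1) by ring, ← hAB, ← hAB']
      generalize (q ^ 2) ^ a = A at *
      generalize (q ^ 2) ^ b = B at *
      generalize z ^ n * q ^ (n ^ 2) = T at *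
      generalize (q ^ 2)⁻¹ = I at *
      generalize rinv q a = ra at *
      generalize rinv q b = rb at *
      generalize partP q 2 (2 * N) = P at *
      generalize z ^ (n - 1) * q ^ ((n - 1) ^ 2) = T1 at *
      generalize z ^ (n + 1) * q ^ ((n + 1) ^ 2) = T2 at *
      linear_combination (-P * ra * ((1 - B * I) * ((1 - B) * rb))) * m1
        - (P * ((1 - A * I) * ((1 - A) * ra)) * rb) * m2
    · field_simp
      ring

lemma summable_theta {q : ℂ} (hq : ‖q‖ < 1) :
    Summable (fun n : ℤ => ‖q‖ ^ (n ^ 2)) := by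
  have key : Summable (fun n : ℕ => ‖q‖ ^ (n ^ 2)) := by
    refine Summable.of_nonneg_of_le (fun n => by positivity) (fun n => ?_)
      (summable_geometric_of_lt_one (norm_nonneg q) hq)
    exact pow_le_pow_of_le_one (norm_nonneg _) hq.le (Nat.le_self_pow (by norm_num) n)
  refine Summable.of_nat_of_neg ?_ ?_
  · refine key.congr fun n => ?_
    exact_mod_cast (zpow_natCast ‖q‖ (n ^ 2)).symm
  · refine key.congr fun n => ?_
    rw [neg_sq]
    exact_mod_cast (zpow_natCast ‖q‖ (n ^ 2)).symm

lemma jtp_tendsto {q z : ℂ} (hq : ‖q‖ < 1) (hq0 : q ≠ 0) (hz : ‖z‖ = 1) :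
    Tendsto (fun N => ∏ j ∈ range N, ((1 + z * q ^ (2 * j + 1)) * (1 + z⁻¹ * q ^ (2 * j + 1))))
      atTop (𝓝 ((phiP q 2)⁻¹ * ∑' n : ℤ, z ^ n * q ^ (n ^ 2))) := by
  have hz0 : z ≠ 0 := by rintro rfl; simp at hz
  have h2 := phiP_ne_zero hq (k := 2) (by norm_num)
  have hP : Tendsto (fun N : ℕ => partP q 2 (2 * N)) atTop (𝓝 (phiP q 2)) :=
    (partP_tendsto hq (by norm_num)).comp (tendsto_id.const_mul_atTop' (by norm_num))
  obtain ⟨C, hC0, hC⟩ := rinv_bdd hq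
  obtain ⟨D, hD⟩ := hP.norm.bddAbove_range
  have hD' : ∀ N, ‖partP q 2 (2 * N)‖ ≤ D := fun n => hD ⟨n, rfl⟩
  have hD0 : 0 ≤ D := (norm_nonneg _).trans (hD' 0)
  have := tendsto_tsum_of_dominated_convergence (𝓕 := atTop)
    (f := fun (N : ℕ) (n : ℤ) =>
      partP q 2 (2 * N) * rinv q (N - n) * rinv q (N + n) * (z ^ n * q ^ (n ^ 2)))
    (g := fun n : ℤ => phiP q 2 * (phiP q 2)⁻¹ * (phiP q 2)⁻¹ * (z ^ n * q ^ (n ^ 2)))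
    (bound := fun n : ℤ => D * C * C * ‖q‖ ^ (n ^ 2))
    ((summable_theta hq).mul_left _)
    (fun n => by
      refine Tendsto.mul_const _ ((hP.mul ((rinv_tendsto hq).comp ?_)).mul
        ((rinv_tendsto hq).comp ?_))
      · exact tendsto_atTop_add_const_right _ (-n) tendsto_natCast_atTop_atTop
      · exact tendsto_atTop_add_const_right _ n tendsto_natCast_atTop_atTop)
    (Eventually.of_forall fun N n => by
      rw [norm_mul, norm_mul, norm_mul, norm_mul, norm_zpow, norm_zpow, hz, one_zpow, one_mul]
      gcongr
      · exact hD' N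
      · exact hC _
      · exact hC _)
  rw [tsum_mul_left, mul_inv_cancel₀ h2, one_mul] at this
  refine this.congr fun N => (finite_jtp_s13 hq hq0 hz0 N).tsum_eq

lemma odd_even (q : ℂ) (k N : ℕ) :
    (∏ j ∈ range N, (1 - q ^ (k * (2 * j + 1)))) * partP q (2 * k) N = partP q k (2 * N) := by
  induction N with
  | zero => simp [partP]
  | succ N ih =>
    have h : partP q k (2 * (N + 1)) = partP q k (2 * N) * (1 - q ^ (k * (2 * N + 1)))
          * (1 - q ^ (k * (2 * N + 1 + 1))) := by
      rw [show 2 * (N + 1) = 2 * N + 1 + 1 by ring]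
      simp [partP, prod_range_succ]
    have h' : partP q (2 * k) (N + 1) = partP q (2 * k) N * (1 - q ^ (2 * k * (N + 1))) := by
      simp [partP, prod_range_succ]
    rw [h, h', ← ih, prod_range_succ]
    ring

lemma nu_sum : Complex.exp (Real.pi * Complex.I / 3) + (Complex.exp (Real.pi * Complex.I / 3))⁻¹
    = 1 := by
  have h := Complex.two_cos (Real.pi / 3 : ℂ)
  rw [← Complex.exp_neg]
  have e : Complex.cos (Real.pi / 3 : ℂ) = 1 / 2 := by
    have := congrArg (fun x : ℝ => (x : ℂ)) Real.cos_pi_div_three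
    push_cast at this
    exact this
  rw [e] at h
  rw [show (Real.pi * Complex.I / 3 : ℂ) = Real.pi / 3 * Complex.I by ring, ← neg_mul, ← h]
  norm_num

open Complex in
/-- `∑_{n ∈ ℤ} ν₆ⁿ q^(n²) = φ₂²φ₃/(φ₁φ₆)` where `ν₆ = e^{πi/3}` is a primitive
sixth root of unity. -/
theorem eta_quotient_sum_3 (q : ℂ) (hq : ‖q‖ < 1) :
    (∑' n : ℤ, Complex.exp (Real.pi * Complex.I / 3) ^ n * q ^ (n ^ 2)) =
      phiP q 2 ^ 2 * phiP q 3 / (phiP q 1 * phiP q 6) := by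
  have n1 := phiP_ne_zero hq (k := 1) (by norm_num)
  have n2 := phiP_ne_zero hq (k := 2) (by norm_num)
  have n6 := phiP_ne_zero hq (k := 6) (by norm_num)
  by_cases hq0 : q = 0
  · subst hq0
    have hφ : ∀ k : ℕ, k ≠ 0 → phiP 0 k = 1 := fun k hk => by simp [phiP, hk]
    rw [hφ 1 (by norm_num), hφ 2 (by norm_num), hφ 3 (by norm_num), hφ 6 (by norm_num),
      tsum_eq_single 0 (fun n hn => by rw [zero_zpow _ (pow_ne_zero 2 hn), mul_zero])]
    simp
  have hν := nu_sum
  have hn : ‖Complex.exp (Real.pi * Complex.I / 3)‖ = 1 := by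
    rw [show (Real.pi * Complex.I / 3 : ℂ) = ((Real.pi / 3 : ℝ) : ℂ) * Complex.I by
      push_cast; ring]
    exact Complex.norm_exp_ofReal_mul_I _
  generalize Complex.exp (Real.pi * Complex.I / 3) = z at *
  have hz0 : z ≠ 0 := by rintro rfl; simp at hn
  have hJ := jtp_tendsto hq hq0 hn
  have hdbl : Tendsto (fun N : ℕ => 2 * N) atTop atTop :=
    tendsto_id.const_mul_atTop' (by norm_num)
  have hT : ∀ k : ℕ, k ≠ 0 → Tendsto (partP q k) atTop (𝓝 (phiP q k)) :=
    fun k hk => partP_tendsto hq hk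
  have l1 := (hJ.mul ((hT 1 (by norm_num)).comp hdbl)).mul (hT 6 (by norm_num))
  have l2 := ((hT 3 (by norm_num)).comp hdbl).mul (hT 2 (by norm_num))
  have heq := tendsto_nhds_unique (l1.congr fun N => ?_) l2
  · rw [eq_div_iff (mul_ne_zero n1 n6)]
    field_simp at heq
    linear_combination heq
  · simp only [Function.comp]
    rw [← odd_even q 1 N, ← odd_even q 3 N]
    have : (∏ j ∈ range N, ((1 + z * q ^ (2 * j + 1)) * (1 + z⁻¹ * q ^ (2 * j + 1))))
        * (∏ j ∈ range N, (1 - q ^ (1 * (2 * j + 1))))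
        = ∏ j ∈ range N, (1 - q ^ (3 * (2 * j + 1))) := by
      rw [← prod_mul_distrib]
      refine prod_congr rfl fun j _ => ?_
      have hzz := mul_inv_cancel₀ hz0
      rw [one_mul, mul_comm 3, pow_mul]
      generalize q ^ (2 * j + 1) = x
      linear_combination (x * (1 - x)) * hν + x ^ 2 * (1 - x) * hzz
    norm_num only [mul_one] at this ⊢
    rw [← this]
    ring
end
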